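/- arXiv:1508.06593 — 2 statements merged into one kernel-verified Lean document; each statement's English description precedes it below -/
import Mathlib

section
/- For every semi-integer a (2a ∈ ℤ, a ≠ 0), the quasi-affine set V^a ⊂ ℂ^{q+2n+1} has dimension at most n, where the dimension of a quasi-affine set (with the Zariski topology) is the supremum of the lengths d of chains Z_0 ⊊ Z_1 ⊊ ⋯ ⊊ Z_d of nonempty irreducible closed subsets. -/
/-- Index type for the mutual-distance variables `R_{ij}`, `1 ≤ i < j ≤ n`. -/
abbrev PairIdx (n : ℕ) := {p : Fin n × Fin n // p.1 < p.2}

/-- The polynomial `R_{ij}` (for an unordered pair `{i,j}`; junk value `0` if `i = j`). -/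
noncomputable def Rvar {n : ℕ} (i j : Fin n) : MvPolynomial (PairIdx n) ℂ :=
  if h : i < j then MvPolynomial.X ⟨(i, j), h⟩
  else if h' : j < i then MvPolynomial.X ⟨(j, i), h'⟩ else 0

/-- The polynomial Cayley–Menger matrix `A(R)` over `ℂ[R_{12}, …, R_{(n−1)n}]`. -/
noncomputable def cmPolyMatrix (n : ℕ) :
    Matrix (Fin (n + 1)) (Fin (n + 1)) (MvPolynomial (PairIdx n) ℂ) :=
  Matrix.of fun i j =>
    Fin.cases (Fin.cases 0 (fun _ => 1) j)
      (fun i' => Fin.cases 1 (fun j' => Rvar i' j' ^ 2) j) i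

/-- The Cayley–Menger determinant polynomial `F = det A(R)`. -/
noncomputable def Fpoly (n : ℕ) : MvPolynomial (PairIdx n) ℂ := (cmPolyMatrix n).det

/-- `∂F/∂R_{ij}` for an unordered pair `{i,j}` (junk value `0` if `i = j`). -/
noncomputable def dF {n : ℕ} (i j : Fin n) : MvPolynomial (PairIdx n) ℂ :=
  if h : i < j then MvPolynomial.pderiv (⟨(i, j), h⟩ : PairIdx n) (Fpoly n)
  else if h' : j < i then MvPolynomial.pderiv (⟨(j, i), h'⟩ : PairIdx n) (Fpoly n) else 0

/-- `(∂F/∂R_{ij})` evaluated at `r`. -/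
noncomputable def evalDF {n : ℕ} (r : PairIdx n → ℂ) (i j : Fin n) : ℂ :=
  MvPolynomial.eval r (dF i j)

/-- `r_{ij}` as a symmetric function of the coordinates indexed by ordered pairs. -/
noncomputable def rC {n : ℕ} (r : PairIdx n → ℂ) (i j : Fin n) : ℂ :=
  if h : i < j then r ⟨(i, j), h⟩ else if h' : j < i then r ⟨(j, i), h'⟩ else 0

/-- The numeric Cayley–Menger matrix `A(r²)` of the numbers `r_{ij}`. -/
noncomputable def cmOf {n : ℕ} (r : PairIdx n → ℂ) :
    Matrix (Fin (n + 1)) (Fin (n + 1)) ℂ :=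
  Matrix.of fun i j =>
    Fin.cases (Fin.cases 0 (fun _ => 1) j)
      (fun i' => Fin.cases 1 (fun j' => rC r i' j' ^ 2) j) i

/-- `Ψ^a_i` evaluated at a point (with `c2 = 2a`): for `a < 0`,
`∑_{j≠i} r_{ij}^{−2a+1} (∂F/∂R_{ij})(r) z_j`; for `a > 0`,
`∑_{j≠i} (∏_{(k,l)≠(i,j)} r_{kl}^{2a−1}) (∂F/∂R_{ij})(r) z_j`. -/
noncomputable def Psi {n : ℕ} (c2 : ℤ) (r : PairIdx n → ℂ) (z : Fin n → ℂ) (i : Fin n) : ℂ :=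
  if c2 < 0 then
    ∑ j ∈ Finset.univ \ {i}, rC r i j ^ (1 - c2).toNat * evalDF r i j * z j
  else
    ∑ j ∈ Finset.univ \ {i},
      (∏ p ∈ Finset.univ.filter
          (fun p : PairIdx n => ¬((p.1.1 = i ∧ p.1.2 = j) ∨ (p.1.1 = j ∧ p.1.2 = i))),
        r p ^ (c2 - 1).toNat) * evalDF r i j * z j

/-- The coordinates of the affine space `ℂ^{q+2n+1}`: `R`-coordinates, `Z`-coordinates,
the coordinate `Δ`, and `M`-coordinates. -/
abbrev TVar (n : ℕ) := PairIdx n ⊕ (Fin n ⊕ (Unit ⊕ Fin n))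

/-- A point of `ℂ^{q+2n+1}`. -/
abbrev Pt (n : ℕ) := TVar n → ℂ

def rPart {n : ℕ} (P : Pt n) : PairIdx n → ℂ := fun p => P (Sum.inl p)
def zPart {n : ℕ} (P : Pt n) : Fin n → ℂ := fun i => P (Sum.inr (Sum.inl i))
def dPart {n : ℕ} (P : Pt n) : ℂ := P (Sum.inr (Sum.inr (Sum.inl ())))
def mPart {n : ℕ} (P : Pt n) : Fin n → ℂ := fun i => P (Sum.inr (Sum.inr (Sum.inr i)))

/-- `g^a_{ij}` evaluated at a point: `R_{ij}^{2a} − 1 − Z_i Z_j` if `a > 0`, and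
`R_{ij}^{−2a}(Z_i Z_j + 1) − 1` if `a < 0` (with `c2 = 2a`). -/
noncomputable def gEval {n : ℕ} (c2 : ℤ) (P : Pt n) (p : PairIdx n) : ℂ :=
  if 0 < c2 then rPart P p ^ c2.toNat - 1 - zPart P p.1.1 * zPart P p.1.2
  else rPart P p ^ (-c2).toNat * (zPart P p.1.1 * zPart P p.1.2 + 1) - 1

/-- `Γ_l` evaluated at a point: `Γ_0 = ∑ M_j Z_j` and
`Γ_l = Δ + ∑ M_j Z_j R_{jl}²` for `l = 1, …, n`. -/
noncomputable def GammaEval {n : ℕ} (P : Pt n) (l : Fin (n + 1)) : ℂ :=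
  Fin.cases (∑ j, mPart P j * zPart P j)
    (fun l' => dPart P + ∑ j, mPart P j * zPart P j * rC (rPart P) j l' ^ 2) l

/-- The algebraic set `Ṽ^a`: common zero set of the `g^a_{ij}`, `F`, and the `Γ_l`. -/
noncomputable def Vtilde (n : ℕ) (c2 : ℤ) : Set (Pt n) :=
  {P | (∀ p, gEval c2 P p = 0) ∧ (cmOf (rPart P)).det = 0 ∧ ∀ l, GammaEval P l = 0}

/-- `W_1 = {∏_{i<j} R_{ij} = 0}`. -/
noncomputable def W1 (n : ℕ) : Set (Pt n) := {P | ∏ p, rPart P p = 0}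

/-- `W_2 = {F_{ij} = 0 for all 0 ≤ i, j ≤ n}` (the `(i,j)` cofactor of the Cayley–Menger
matrix is the `(j,i)` entry of its adjugate). -/
noncomputable def W2 (n : ℕ) : Set (Pt n) :=
  {P | ∀ i j : Fin (n + 1), (cmOf (rPart P)).adjugate j i = 0}

/-- `W_3^a = {Ψ^a_1 = ⋯ = Ψ^a_n = 0}`. -/
noncomputable def W3 (n : ℕ) (c2 : ℤ) : Set (Pt n) :=
  {P | ∀ i, Psi c2 (rPart P) (zPart P) i = 0}

/-- The quasi-affine set `V^a = Ṽ^a \ (W_1 ∪ W_2 ∪ W_3^a)`. -/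
noncomputable def Vset (n : ℕ) (c2 : ℤ) : Set (Pt n) :=
  Vtilde n c2 \ (W1 n ∪ W2 n ∪ W3 n c2)

/-- A subset of affine space `ℂ^σ` is Zariski-closed if it is the common zero set of a
collection of polynomials. -/
def IsZClosed {σ : Type} (S : Set (σ → ℂ)) : Prop :=
  ∃ T : Set (MvPolynomial σ ℂ), S = {x | ∀ f ∈ T, MvPolynomial.eval x f = 0}

/-- A subset is irreducible (in the Zariski topology): it is nonempty, and whenever it is
covered by two Zariski-closed sets it is contained in one of them. (For a subset of a
quasi-affine set this coincides with irreducibility in the subspace topology.) -/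
def IsIrr {σ : Type} (S : Set (σ → ℂ)) : Prop :=
  S.Nonempty ∧ ∀ C₁ C₂ : Set (σ → ℂ), IsZClosed C₁ → IsZClosed C₂ →
    S ⊆ C₁ ∪ C₂ → S ⊆ C₁ ∨ S ⊆ C₂

/-- `S` is an irreducible component of `W`: a maximal irreducible subset of `W`. -/
def IsIrrComponentOf {σ : Type} (W S : Set (σ → ℂ)) : Prop :=
  S ⊆ W ∧ IsIrr S ∧ ∀ S' : Set (σ → ℂ), S' ⊆ W → IsIrr S' → S ⊆ S' → S' = S

/-- The dimension of `V` (with its induced Zariski topology) is at most `N`: every chain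
`Z_0 ⊊ Z_1 ⊊ ⋯ ⊊ Z_d` of nonempty irreducible subsets of `V` that are closed in `V`
has length `d ≤ N`. -/
def DimLE {σ : Type} (V : Set (σ → ℂ)) (N : ℕ) : Prop :=
  ∀ (d : ℕ) (Z : Fin (d + 1) → Set (σ → ℂ)),
    StrictMono Z → (∀ i, (Z i).Nonempty) → (∀ i, IsIrr (Z i)) →
    (∀ i, ∃ C, IsZClosed C ∧ Z i = V ∩ C) → d ≤ N


theorem aux_exists_derivation {s : ℕ} {K : Type} [Field K] [Algebra ℂ K]
    [Algebra (MvPolynomial (Fin s) ℂ) K] [IsScalarTower ℂ (MvPolynomial (Fin s) ℂ) K]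
    [FaithfulSMul (MvPolynomial (Fin s) ℂ) K]
    [Algebra.IsAlgebraic (MvPolynomial (Fin s) ℂ) K] (c : Fin s → K) :
    ∃ D : Derivation ℂ K K, ∀ i, D (algebraMap (MvPolynomial (Fin s) ℂ) K (MvPolynomial.X i)) = c i := by
  set B := MvPolynomial (Fin s) ℂ
  let F := FractionRing B
  let : Algebra F K := FractionRing.liftAlgebra B K
  have : IsScalarTower B F K := FractionRing.isScalarTower_liftAlgebra B K
  have : Algebra.IsAlgebraic F K := (IsFractionRing.comap_isAlgebraic_iff (A := B) (K := F) (C := K)).1 inferInstance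
  have : CharZero F := charZero_of_injective_algebraMap (FaithfulSMul.algebraMap_injective ℂ F)
  have : Algebra.FormallyEtale F K := Algebra.FormallyEtale.of_isSeparable F K
  have : Algebra.FormallyEtale B F := Algebra.FormallyEtale.of_isLocalization (nonZeroDivisors B)
  have : Algebra.FormallyEtale B K := Algebra.FormallyEtale.comp B F K
  let d : Derivation ℂ B K := MvPolynomial.mkDerivation ℂ c
  let e := KaehlerDifferential.tensorKaehlerEquivOfFormallyEtale ℂ B K
  let l : Ω[K⁄ℂ] →ₗ[K] K := (d.liftKaehlerDifferential.liftBaseChange K).comp e.symm.toLinearMap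
  refine ⟨l.compDer (KaehlerDifferential.D ℂ K), fun i => ?_⟩
  have := KaehlerDifferential.tensorKaehlerEquivOfFormallyEtale_symm_D_algebraMap ℂ B K (MvPolynomial.X i)
  simp only [Derivation.coe_comp, l, e, LinearMap.coe_comp, Function.comp_apply, LinearMap.coe_restrictScalars, Derivation.coeFn_coe, LinearEquiv.coe_coe]
  rw [this]
  simp [d]
  exact MvPolynomial.mkDerivation_X (R := ℂ) c i

theorem aux_krull_le {A K : Type} [CommRing A] [IsDomain A] [Algebra ℂ A] [Algebra.FiniteType ℂ A]
    [Field K] [Algebra A K] [IsFractionRing A K] [Algebra ℂ K] [IsScalarTower ℂ A K] (n : ℕ)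
    (φ : Derivation ℂ K K →ₗ[K] (Fin n → K)) (hφ : ∀ D, φ D = 0 → D = 0) :
    ringKrullDim A ≤ n := by
  obtain ⟨s, g, ginj, gint⟩ := exists_integral_inj_algHom_of_fg ℂ A
  let : Algebra (MvPolynomial (Fin s) ℂ) A := g.toRingHom.toAlgebra
  have : IsScalarTower ℂ (MvPolynomial (Fin s) ℂ) A := IsScalarTower.of_algebraMap_eq
    (fun x => (g.commutes x).symm)
  have : Algebra.IsIntegral (MvPolynomial (Fin s) ℂ) A := ⟨gint⟩
  let : Algebra (MvPolynomial (Fin s) ℂ) K := ((algebraMap A K).comp g.toRingHom).toAlgebra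
  have : IsScalarTower (MvPolynomial (Fin s) ℂ) A K := IsScalarTower.of_algebraMap_eq (fun x => rfl)
  have : IsScalarTower ℂ (MvPolynomial (Fin s) ℂ) K := IsScalarTower.of_algebraMap_eq (fun x => by
    rw [IsScalarTower.algebraMap_apply ℂ A K, IsScalarTower.algebraMap_apply ℂ (MvPolynomial (Fin s) ℂ) A]; rfl)
  have inj : Function.Injective (algebraMap (MvPolynomial (Fin s) ℂ) K) :=
    (IsFractionRing.injective A K).comp ginj
  have : FaithfulSMul (MvPolynomial (Fin s) ℂ) K := (faithfulSMul_iff_algebraMap_injective _ _).2 inj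
  have : Algebra.IsAlgebraic A K := IsLocalization.isAlgebraic K (nonZeroDivisors A)
  have : FaithfulSMul (MvPolynomial (Fin s) ℂ) A := (faithfulSMul_iff_algebraMap_injective _ _).2 ginj
  have : Algebra.IsAlgebraic (MvPolynomial (Fin s) ℂ) K := Algebra.IsAlgebraic.trans _ A K
  -- Krull dimension of `A` is at most `s`
  have h1 : ringKrullDim A ≤ ringKrullDim (MvPolynomial (Fin s) ℂ) := by
    refine Order.krullDim_le_of_strictMono (PrimeSpectrum.comap (algebraMap (MvPolynomial (Fin s) ℂ) A)) ?_
    intro p q hpq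
    exact Ideal.IsIntegral.comap_lt_comap (R := MvPolynomial (Fin s) ℂ) (I := p.asIdeal) (J := q.asIdeal) hpq
  rw [MvPolynomial.ringKrullDim_of_isNoetherianRing, ringKrullDim_eq_zero_of_field, zero_add,
    Nat.card_fin] at h1
  refine h1.trans ?_
  suffices s ≤ n by exact_mod_cast this
  choose D hD using fun i : Fin s => aux_exists_derivation (K := K) (Pi.single i 1)
  let ψ : (Fin s → K) →ₗ[K] (Fin n → K) := φ.comp (Fintype.linearCombination K D)
  have hψ : Function.Injective ψ := by
    rw [injective_iff_map_eq_zero]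
    intro c hc
    have h := hφ _ hc
    funext j
    have h2 := Derivation.congr_fun h (algebraMap (MvPolynomial (Fin s) ℂ) K (MvPolynomial.X j))
    have h3 : ∀ (t : Finset (Fin s)) (x : K), (∑ i ∈ t, c i • D i) x = ∑ i ∈ t, c i • D i x := by
      intro t x
      induction t using Finset.induction_on with
      | empty => simp
      | insert a t ha ih => simp [Finset.sum_insert ha, ih]
    rw [Fintype.linearCombination_apply, h3] at h2
    simpa [hD, Pi.single_apply] using h2
  simpa using LinearMap.finrank_le_finrank_of_injective hψ

/-- `r_{ij}` over an arbitrary ring. -/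
noncomputable def gR {S : Type} [CommRing S] {n : ℕ} (r : PairIdx n → S) (i j : Fin n) : S :=
  if h : i < j then r ⟨(i, j), h⟩ else if h' : j < i then r ⟨(j, i), h'⟩ else 0

/-- Cayley–Menger matrix over an arbitrary ring. -/
noncomputable def gA {S : Type} [CommRing S] {n : ℕ} (r : PairIdx n → S) :
    Matrix (Fin (n + 1)) (Fin (n + 1)) S :=
  Matrix.of fun i j =>
    Fin.cases (Fin.cases 0 (fun _ => 1) j)
      (fun i' => Fin.cases 1 (fun j' => gR r i' j' ^ 2) j) i

/-- The partial derivative of the Cayley–Menger determinant, through the adjugate. -/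
noncomputable def gG {S : Type} [CommRing S] {n : ℕ} (r : PairIdx n → S) (i j : Fin n) : S :=
  4 * gR r i j * (gA r).adjugate i.succ j.succ

/-- `Ψ` over an arbitrary ring. -/
noncomputable def gPsi {S : Type} [CommRing S] {n : ℕ} (c2 : ℤ) (r : PairIdx n → S)
    (z : Fin n → S) (i : Fin n) : S :=
  if c2 < 0 then
    ∑ j ∈ Finset.univ \ {i}, gR r i j ^ (1 - c2).toNat * gG r i j * z j
  else
    ∑ j ∈ Finset.univ \ {i},
      (∏ p ∈ Finset.univ.filter
          (fun p : PairIdx n => ¬((p.1.1 = i ∧ p.1.2 = j) ∨ (p.1.1 = j ∧ p.1.2 = i))),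
        r p ^ (c2 - 1).toNat) * gG r i j * z j

/-- `g` over an arbitrary ring. -/
noncomputable def gGe {S : Type} [CommRing S] {n : ℕ} (c2 : ℤ) (r : PairIdx n → S)
    (z : Fin n → S) (p : PairIdx n) : S :=
  if 0 < c2 then r p ^ c2.toNat - 1 - z p.1.1 * z p.1.2
  else r p ^ (-c2).toNat * (z p.1.1 * z p.1.2 + 1) - 1

section nat
variable {S T : Type} [CommRing S] [CommRing T] (f : S →+* T) {n : ℕ}

theorem map_gR (r : PairIdx n → S) (i j : Fin n) : f (gR r i j) = gR (fun p => f (r p)) i j := by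
  unfold gR; split_ifs <;> simp

theorem map_gA (r : PairIdx n → S) : f.mapMatrix (gA r) = gA (fun p => f (r p)) := by
  ext i j
  refine Fin.cases ?_ (fun i => ?_) i <;> refine Fin.cases ?_ (fun j => ?_) j <;>
    simp [gA, map_gR]

theorem map_gG (r : PairIdx n → S) (i j : Fin n) : f (gG r i j) = gG (fun p => f (r p)) i j := by
  unfold gG
  rw [← map_gA, ← RingHom.map_adjugate]
  have h4 : f 4 = 4 := map_ofNat f 4
  simp [map_gR, h4]

theorem map_gPsi (c2 : ℤ) (r : PairIdx n → S) (z : Fin n → S) (i : Fin n) :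
    f (gPsi c2 r z i) = gPsi c2 (fun p => f (r p)) (fun i => f (z i)) i := by
  unfold gPsi
  split_ifs <;> simp [map_gG, map_gR]

theorem map_gGe (c2 : ℤ) (r : PairIdx n → S) (z : Fin n → S) (p : PairIdx n) :
    f (gGe c2 r z p) = gGe c2 (fun p => f (r p)) (fun i => f (z i)) p := by
  unfold gGe
  split_ifs <;> simp

theorem gR_symm (r : PairIdx n → S) (i j : Fin n) : gR r i j = gR r j i := by
  unfold gR
  rcases lt_trichotomy i j with h | h | h
  · simp [h, h.not_gt]
  · simp [h]
  · simp [h, h.not_gt]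

theorem gR_self (r : PairIdx n → S) (i : Fin n) : gR r i i = 0 := by simp [gR]

theorem gA_transpose (r : PairIdx n → S) : (gA r).transpose = gA r := by
  ext i j
  refine Fin.cases ?_ (fun i => ?_) i <;> refine Fin.cases ?_ (fun j => ?_) j <;>
    simp [gA]
  rw [gR_symm]

theorem gA_adj_symm (r : PairIdx n → S) (i j) : (gA r).adjugate i j = (gA r).adjugate j i := by
  conv_lhs => rw [← gA_transpose, ← Matrix.adjugate_transpose, Matrix.transpose_apply]

theorem gG_symm (r : PairIdx n → S) (i j : Fin n) : gG r i j = gG r j i := by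
  unfold gG; rw [gR_symm, gA_adj_symm]

theorem der_prod [Algebra ℂ S] (D : Derivation ℂ S S) {ι : Type} [DecidableEq ι] (s : Finset ι)
    (g : ι → S) : D (∏ i ∈ s, g i) = ∑ i ∈ s, (∏ j ∈ s.erase i, g j) * D (g i) := by
  induction s using Finset.induction_on with
  | empty => simp
  | insert a s ha ih =>
    rw [Finset.prod_insert ha, D.leibniz, ih, Finset.sum_insert ha, Finset.erase_insert ha,
      add_comm, smul_eq_mul, smul_eq_mul, Finset.mul_sum]
    congr 1
    refine Finset.sum_congr rfl fun i hi => ?_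
    rw [Finset.erase_insert_of_ne (by rintro rfl; exact ha hi), Finset.prod_insert
      (fun h => ha (Finset.mem_of_mem_erase h)), mul_assoc]

theorem der_det [Algebra ℂ S] (D : Derivation ℂ S S) {ι : Type} [DecidableEq ι] [Fintype ι]
    (M : Matrix ι ι S) : D M.det = ∑ i, ∑ j, M.adjugate i j * D (M j i) := by
  have h : ∀ i, ∑ j, M.adjugate i j * D (M j i) = (M.updateCol i (fun j => D (M j i))).det := by
    intro i
    rw [← Matrix.cramer_apply, Matrix.cramer_eq_adjugate_mulVec]; rfl
  simp_rw [h, Matrix.det_apply, map_sum]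
  rw [Finset.sum_comm]
  refine Finset.sum_congr rfl fun τ _ => ?_
  have : D (Equiv.Perm.sign τ • ∏ i, M (τ i) i) = Equiv.Perm.sign τ • D (∏ i, M (τ i) i) := by
    rcases Int.units_eq_one_or (Equiv.Perm.sign τ) with h | h <;> simp [h]
  rw [this, der_prod, Finset.smul_sum]
  refine Finset.sum_congr rfl fun i _ => ?_
  congr 1
  rw [← Finset.prod_erase_mul _ _ (Finset.mem_univ i)]
  congr 1
  · refine Finset.prod_congr rfl fun j hj => ?_
    rw [Matrix.updateCol_ne (Finset.ne_of_mem_erase hj)]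
  · simp

theorem der_gA [Algebra ℂ S] (D : Derivation ℂ S S) (r : PairIdx n → S) :
    D (gA r).det = ∑ i, ∑ j, (gA r).adjugate i.succ j.succ * (2 * gR r i j * D (gR r i j)) := by
  rw [der_det, Fin.sum_univ_succ, Fin.sum_univ_succ]
  simp only [Fin.sum_univ_succ]
  simp [gA, D.leibniz_pow]
  refine Finset.sum_congr rfl fun i _ => Finset.sum_congr rfl fun j _ => ?_
  rw [gR_symm r j i]; ring

end nat

theorem evalDF_eq {n : ℕ} (r : PairIdx n → ℂ) (i j : Fin n) : evalDF r i j = gG r i j := by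
  have key : ∀ (p : PairIdx n), MvPolynomial.pderiv p (Fpoly n) =
      4 * MvPolynomial.X p * (gA (fun p => (MvPolynomial.X p : MvPolynomial (PairIdx n) ℂ))).adjugate p.1.1.succ p.1.2.succ := by
    intro p
    have h0 : Fpoly n = (gA (fun p => (MvPolynomial.X p : MvPolynomial (PairIdx n) ℂ))).det := rfl
    set X' : PairIdx n → MvPolynomial (PairIdx n) ℂ := fun p => MvPolynomial.X p with hX'
    have hD : ∀ i j : Fin n, MvPolynomial.pderiv p (gR X' i j) =
        if (i = p.1.1 ∧ j = p.1.2) ∨ (i = p.1.2 ∧ j = p.1.1) then 1 else 0 := by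
      intro i j
      obtain ⟨⟨a, b⟩, hab⟩ := p
      simp only at hab
      unfold gR
      split_ifs with h1 h2 h2 h3
      all_goals simp only [hX', MvPolynomial.pderiv_X, Pi.single_apply, map_zero, Subtype.mk.injEq, Prod.mk.injEq] at *
      all_goals grind
    have hsum : ∀ i j : Fin n, (gA X').adjugate i.succ j.succ * (2 * gR X' i j * MvPolynomial.pderiv p (gR X' i j)) = 
       (if i = p.1.1 then if j = p.1.2 then 2 * MvPolynomial.X p * (gA X').adjugate p.1.1.succ p.1.2.succ else 0 else 0) + 
       (if i = p.1.2 then if j = p.1.1 then 2 * MvPolynomial.X p * (gA X').adjugate p.1.1.succ p.1.2.succ else 0 else 0) := by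
      intro i j
      rw [hD]
      have hp := p.2
      have hp' := hp.ne
      have e : gR X' p.1.1 p.1.2 = MvPolynomial.X p := by simp [gR, hp, hX']
      by_cases h1 : i = p.1.1 ∧ j = p.1.2
      · obtain ⟨rfl, rfl⟩ := h1
        simp [e, hp']; ring
      · by_cases h2 : i = p.1.2 ∧ j = p.1.1
        · obtain ⟨rfl, rfl⟩ := h2
          simp [gR_symm X' p.1.2 p.1.1, e, hp'.symm, gA_adj_symm X' p.1.2.succ p.1.1.succ]; ring
        · rw [if_neg (by tauto)]
          grind
    rw [h0, der_gA]
    simp_rw [hsum, Finset.sum_add_distrib]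
    simp
    ring
  have e2 : ∀ i j, MvPolynomial.eval r ((gA (fun p => (MvPolynomial.X p : MvPolynomial (PairIdx n) ℂ))).adjugate i j) = (gA r).adjugate i j := by
    intro i j
    have h1 := map_gA (MvPolynomial.eval r) (fun p => (MvPolynomial.X p : MvPolynomial (PairIdx n) ℂ))
    have h2 := RingHom.map_adjugate (MvPolynomial.eval r) (gA (fun p => (MvPolynomial.X p : MvPolynomial (PairIdx n) ℂ)))
    rw [h1] at h2
    have h3 := congrFun (congrFun h2 i) j
    simpa using h3
  rcases lt_trichotomy i j with h | h | h
  · simp [evalDF, dF, h, key, gG, gR, e2]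
  · subst h; simp [evalDF, dF, gG, gR]
  · rw [gG_symm]
    simp [evalDF, dF, h, h.not_gt, key, gG, gR, e2]

theorem Psi_eq {n : ℕ} (c2 : ℤ) (r : PairIdx n → ℂ) (z : Fin n → ℂ) (i : Fin n) :
    Psi c2 r z i = gPsi c2 r z i := by
  unfold Psi gPsi
  simp only [evalDF_eq]
  rfl

section field
variable {K : Type} [Field K] [Algebra ℂ K] {n : ℕ}

theorem aux_H (c2 : ℤ) (hc2 : c2 ≠ 0) (r : PairIdx n → K) (z : Fin n → K)
    (hr : ∀ p, r p ≠ 0) (hg : ∀ p, gGe c2 r z p = 0) :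
    ∃ (C Q : K) (H : PairIdx n → K), C ≠ 0 ∧
      (∀ (D : Derivation ℂ K K) p, H p * D (z p.1.1 * z p.1.2) = C * D (r p)) ∧
      ∀ i, gPsi c2 r z i = Q * ∑ j, gR H i j * gG r i j * z j := by
  have : CharZero K := charZero_of_injective_algebraMap (FaithfulSMul.algebraMap_injective ℂ K)
  have diag : ∀ (H : PairIdx n → K) (i : Fin n), ∑ j, gR H i j * gG r i j * z j
      = ∑ j ∈ Finset.univ \ {i}, gR H i j * gG r i j * z j := by
    intro H i
    symm
    refine Finset.sum_subset (Finset.subset_univ _) fun j _ hj => ?_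
    have : j = i := by simpa using hj
    rw [this, gR_self]; ring
  rcases lt_or_gt_of_ne hc2 with hneg | hpos
  · obtain ⟨k, hk⟩ : ∃ k : ℕ, c2 = -((k : ℤ) + 1) := ⟨(-c2 - 1).toNat, by omega⟩
    have e1 : (-c2).toNat = k + 1 := by omega
    have e2 : (1 - c2).toNat = k + 2 := by omega
    refine ⟨-((k + 1 : ℕ) : K), 1, fun p => r p ^ (k + 2), ?_, ?_, ?_⟩
    · rw [neg_ne_zero]; exact_mod_cast Nat.succ_ne_zero k
    · intro D p
      have h := hg p
      simp only [gGe, if_neg (not_lt.2 hneg.le), e1] at h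
      have h' : r p ^ (k + 1) * (z p.1.1 * z p.1.2 + 1) = 1 := by linear_combination h
      have h2 := congrArg D h'
      rw [D.leibniz, D.leibniz_pow, map_add, D.map_one_eq_zero] at h2
      simp only [smul_eq_mul, add_zero, nsmul_eq_mul, Nat.add_sub_cancel] at h2
      linear_combination r p * h2 - ((k + 1 : ℕ) : K) * D (r p) * h'
    · intro i
      rw [diag, one_mul]
      simp only [gPsi, if_pos hneg, e2]
      refine Finset.sum_congr rfl fun j hj => ?_
      congr 2
      unfold gR; split_ifs <;> simp
  · obtain ⟨k, hk⟩ : ∃ k : ℕ, c2 = (k : ℤ) + 1 := ⟨(c2 - 1).toNat, by omega⟩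
    have e1 : c2.toNat = k + 1 := by omega
    have e2 : (c2 - 1).toNat = k := by omega
    refine ⟨((k + 1 : ℕ) : K), ∏ p, r p ^ k, fun p => (r p ^ k)⁻¹, ?_, ?_, ?_⟩
    · exact_mod_cast Nat.succ_ne_zero k
    · intro D p
      have h := hg p
      simp only [gGe, if_pos hpos, e1] at h
      have h' : z p.1.1 * z p.1.2 = r p ^ (k + 1) - 1 := by linear_combination -h
      rw [h', map_sub, D.leibniz_pow, D.map_one_eq_zero]
      simp only [smul_eq_mul, sub_zero, nsmul_eq_mul, Nat.add_sub_cancel]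
      have := pow_ne_zero k (hr p)
      field_simp
    · intro i
      rw [diag, Finset.mul_sum]
      simp only [gPsi, if_neg (not_lt.2 hpos.le), e2]
      refine Finset.sum_congr rfl fun j hj => ?_
      have hij : j ≠ i := by simpa using hj
      rw [← mul_assoc, ← mul_assoc]
      congr 2
      obtain ⟨p0, hp0, hp1⟩ : ∃ p0 : PairIdx n, gR (fun p => (r p ^ k)⁻¹) i j = (r p0 ^ k)⁻¹ ∧
          ∀ p : PairIdx n, ((p.1.1 = i ∧ p.1.2 = j) ∨ (p.1.1 = j ∧ p.1.2 = i)) ↔ p = p0 := by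
        rcases lt_or_gt_of_ne hij with h | h
        · refine ⟨⟨(j, i), h⟩, by simp [gR, h, h.not_gt], ?_⟩
          rintro ⟨⟨a, b⟩, hab⟩
          simp only [Subtype.mk.injEq, Prod.mk.injEq] at *
          grind
        · refine ⟨⟨(i, j), h⟩, by simp [gR, h], ?_⟩
          rintro ⟨⟨a, b⟩, hab⟩
          simp only [Subtype.mk.injEq, Prod.mk.injEq] at *
          grind
      rw [hp0]
      simp only [hp1]
      rw [Finset.filter_ne', ← Finset.prod_erase_mul _ _ (Finset.mem_univ p0)]
      have := pow_ne_zero k (hr p0)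
      field_simp

theorem aux_field (c2 : ℤ) (hc2 : c2 ≠ 0) (r : PairIdx n → K) (z : Fin n → K) (δ : K)
    (m : Fin n → K) (hr : ∀ p, r p ≠ 0) (hg : ∀ p, gGe c2 r z p = 0)
    (hdet : (gA r).det = 0)
    (hΓ : (gA r).mulVec (Fin.cons δ (fun j => m j * z j) : Fin (n + 1) → K) = 0)
    (hadj : ∃ i j, (gA r).adjugate i j ≠ 0) (hΨ : ∃ i, gPsi c2 r z i ≠ 0) :
    ∃ w : Fin n → K, ∀ D : Derivation ℂ K K, (∀ j, D (w j) = 0) →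
      (∀ p, D (r p) = 0) ∧ (∀ i, D (z i) = 0) ∧ D δ = 0 ∧ ∀ i, D (m i) = 0 := by
  have : CharZero K := charZero_of_injective_algebraMap (FaithfulSMul.algebraMap_injective ℂ K)
  classical
  obtain ⟨C, Q, H, hC, hH, hP⟩ := aux_H c2 hc2 r z hr hg
  set u : Fin (n + 1) → K := Fin.cons δ (fun j => m j * z j) with hu
  -- the main elimination step
  have S3 : ∀ (D : Derivation ℂ K K) (l c : Fin (n + 1)), (gA r).adjugate l c ≠ 0 →
      (∀ i, D (z i) = 0) → D (u l) = 0 → (∀ j, z j = 0 → D (m j) = 0) →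
      (∀ p, D (r p) = 0) ∧ (∀ i, D (z i) = 0) ∧ D δ = 0 ∧ ∀ i, D (m i) = 0 := by
    intro D l c hlc hz hul hm
    have hDr : ∀ p, D (r p) = 0 := by
      intro p
      have h := hH D p
      rw [D.leibniz, hz, hz] at h
      simpa [hC] using h
    have hDR : ∀ i j, D (gR r i j) = 0 := by
      intro i j; unfold gR; split_ifs <;> simp [hDr]
    have hDA : ∀ i j, D (gA r i j) = 0 := by
      intro i j
      refine Fin.cases ?_ (fun i => ?_) i <;> refine Fin.cases ?_ (fun j => ?_) j <;>
        simp [gA, D.leibniz_pow, hDR]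
    have hAu : (gA r).mulVec (fun k => D (u k)) = 0 := by
      funext i
      have h := congrArg D (congrFun hΓ i)
      simp only [Matrix.mulVec, dotProduct, map_sum, D.leibniz, hDA, Pi.zero_apply, map_zero] at h
      simpa [Matrix.mulVec, dotProduct] using h
    have hu0 : (fun k => D (u k)) = 0 := by
      rw [Matrix.adjugate_apply] at hlc
      refine Matrix.eq_zero_of_mulVec_eq_zero hlc ?_
      funext i
      by_cases hi : i = c
      · subst hi
        simp [Matrix.mulVec, dotProduct, Pi.single_apply, hul]
      · have := congrFun hAu i
        simpa [Matrix.mulVec, dotProduct, hi] using this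
    refine ⟨hDr, hz, by simpa [hu] using congrFun hu0 0, fun i => ?_⟩
    by_cases hzi : z i = 0
    · exact hm i hzi
    · have h := congrFun hu0 i.succ
      simp [hu, hz, hzi] at h
      exact h
  by_cases hcase : ∃ j c, z j = 0 ∧ (gA r).adjugate j.succ c ≠ 0
  · obtain ⟨j, c, hzj, hjc⟩ := hcase
    refine ⟨fun j => if z j = 0 then m j else z j, fun D hD => ?_⟩
    have hz : ∀ i, D (z i) = 0 := by
      intro i
      have h := hD i
      by_cases hi : z i = 0
      · rw [hi, map_zero]
      · simpa [hi] using h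
    refine S3 D j.succ c hjc hz ?_ ?_
    · simp [hu, hzj]
    · intro j hj
      simpa [hj] using hD j
  · push Not at hcase
    obtain ⟨l, c, hlc⟩ := hadj
    obtain ⟨i0, hi0⟩ := hΨ
    have hzi0 : z i0 ≠ 0 := by
      intro h
      apply hi0
      rw [hP]
      simp [gG, hcase i0 _ h]
    refine ⟨fun j => if j = i0 then u l else if z j = 0 then m j else z j, fun D hD => ?_⟩
    have hz' : ∀ i, i ≠ i0 → D (z i) = 0 := by
      intro i hi
      have h := hD i
      by_cases hi : z i = 0
      · rw [hi, map_zero]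
      · simpa [*] using h
    have hsum : ∑ i, gPsi c2 r z i * D (z i) = 0 := by
      have h := der_gA D r
      rw [hdet, map_zero] at h
      have h1 : ∀ i j, C * D (gR r i j) * gG r i j = gR H i j * D (z i * z j) * gG r i j := by
        intro i j
        congr 1
        unfold gR
        split_ifs with h1 h2
        · exact (hH D ⟨(i, j), h1⟩).symm
        · rw [mul_comm (z i)]
          exact (hH D ⟨(j, i), h2⟩).symm
        · simp
      have h2 : ∑ i, ∑ j, gR H i j * D (z i * z j) * gG r i j = 0 := by
        have : ∀ i j, gR H i j * D (z i * z j) * gG r i j = 2 * C * 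
          ((gA r).adjugate i.succ j.succ * (2 * gR r i j * D (gR r i j))) := by
          intro i j
          rw [← h1, gG]; ring
        simp_rw [this, ← Finset.mul_sum]
        rw [← h, mul_zero]
      have h3 : ∑ i, ∑ j, gR H i j * D (z i * z j) * gG r i j =
          ∑ i, ∑ j, gR H i j * gG r i j * z j * D (z i) +
          ∑ i, ∑ j, gR H i j * gG r i j * z j * D (z i) := by
        conv_rhs => 
          arg 2
          rw [Finset.sum_comm]
        simp_rw [← Finset.sum_add_distrib]
        refine Finset.sum_congr rfl fun i _ => Finset.sum_congr rfl fun j _ => ?_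
        rw [D.leibniz, gR_symm H j i, gG_symm r j i, smul_eq_mul, smul_eq_mul]
        ring
      rw [h2] at h3
      have h4 : ∑ i, ∑ j, gR H i j * gG r i j * z j * D (z i) = 0 := by
        have : (2 : K) ≠ 0 := two_ne_zero
        have h5 : (2 : K) * ∑ i, ∑ j, gR H i j * gG r i j * z j * D (z i) = 0 := by
          rw [two_mul]; exact h3.symm
        exact (mul_eq_zero.1 h5).resolve_left this
      simp_rw [hP, mul_assoc Q, Finset.sum_mul]
      rw [← Finset.mul_sum, h4, mul_zero]
    rw [Finset.sum_eq_single i0 (fun i _ hi => by rw [hz' i hi, mul_zero]) (by simp)] at hsum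
    have hz : ∀ i, D (z i) = 0 := by
      intro i
      by_cases hi : i = i0
      · rw [hi]; exact (mul_eq_zero.1 hsum).resolve_left hi0
      · exact hz' i hi
    refine S3 D l c hlc hz ?_ ?_
    · simpa using hD i0
    · intro j hj
      have : j ≠ i0 := by rintro rfl; exact hzi0 hj
      simpa [hj, this] using hD j

end field

/-- The vanishing ideal. -/
noncomputable def vId {σ : Type} (S : Set (σ → ℂ)) : Ideal (MvPolynomial σ ℂ) :=
  MvPolynomial.vanishingIdeal ℂ S

theorem mem_vId {σ : Type} {S : Set (σ → ℂ)} {f : MvPolynomial σ ℂ} :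
    f ∈ vId S ↔ ∀ x ∈ S, MvPolynomial.eval x f = 0 := by
  simp [vId, MvPolynomial.mem_vanishingIdeal_iff]

theorem vId_prime {σ : Type} {S : Set (σ → ℂ)} (hS : IsIrr S) : (vId S).IsPrime := by
  refine ⟨?_, ?_⟩
  · rw [Ideal.ne_top_iff_one, mem_vId]
    obtain ⟨x, hx⟩ := hS.1
    intro h
    simpa using h x hx
  · intro f g hfg
    rw [mem_vId] at hfg
    have := hS.2 {x | MvPolynomial.eval x f = 0} {x | MvPolynomial.eval x g = 0}
      ⟨{f}, by simp⟩ ⟨{g}, by simp⟩ (fun x hx => by simpa using hfg x hx)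
    rw [mem_vId, mem_vId]
    exact this

theorem aux_dimLE {σ : Type} (V : Set (σ → ℂ)) (n : ℕ)
    (h : ∀ S ⊆ V, IsIrr S → ringKrullDim (MvPolynomial σ ℂ ⧸ vId S) ≤ n) : DimLE V n := by
  intro d Z hZ _ hirr hcl
  have hV : ∀ i, Z i ⊆ V := fun i => by
    obtain ⟨C, _, hC⟩ := hcl i
    rw [hC]; exact Set.inter_subset_left
  have hlt : ∀ i j, i < j → vId (Z j) < vId (Z i) := by
    intro i j hij
    have hle := (hZ hij).le
    refine lt_of_le_not_ge (fun f hf => mem_vId.2 fun x hx => mem_vId.1 hf x (hle hx)) fun hge => ?_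
    obtain ⟨C, ⟨T, rfl⟩, hC⟩ := hcl i
    refine (hZ hij).not_ge fun x hx => ?_
    rw [hC]
    refine ⟨hV j hx, fun f hf => ?_⟩
    refine mem_vId.1 (hge (mem_vId.2 fun y hy => ?_)) x hx
    rw [hC] at hy
    exact hy.2 f hf
  set I := vId (Z (Fin.last d)) with hI
  have hIle : ∀ i, I ≤ vId (Z i) := by
    intro i
    rcases (Fin.le_last i).lt_or_eq with h | h
    · exact (hlt _ _ h).le
    · rw [h]
  have key : ∀ i : Fin (d + 1), ((vId (Z i)).map (Ideal.Quotient.mk I)).IsPrime := fun i => by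
    have := vId_prime (hirr i)
    exact Ideal.map_isPrime_of_surjective Ideal.Quotient.mk_surjective
      (by rw [Ideal.mk_ker]; exact hIle i)
  have hcomap : ∀ i, ((vId (Z i)).map (Ideal.Quotient.mk I)).comap (Ideal.Quotient.mk I) = vId (Z i) := by
    intro i
    rw [Ideal.comap_map_of_surjective _ Ideal.Quotient.mk_surjective, sup_eq_left]
    rw [← RingHom.ker_eq_comap_bot, Ideal.mk_ker]; exact hIle i
  let s : LTSeries (PrimeSpectrum (MvPolynomial σ ℂ ⧸ I)) :=
    { length := d
      toFun := fun i => ⟨_, key i.rev⟩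
      step := fun i => by
        have h1 := hlt (Fin.rev i.succ) (Fin.rev i.castSucc) (Fin.rev_lt_rev.2 (Fin.castSucc_lt_succ))
        change Ideal.map _ _ < Ideal.map _ _
        refine lt_of_le_not_ge (Ideal.map_mono h1.le) fun hge => ?_
        have h2 := Ideal.comap_mono (f := Ideal.Quotient.mk I) hge
        rw [hcomap, hcomap] at h2
        exact h1.not_ge h2 }
  have h1 := (Order.LTSeries.length_le_krullDim s).trans (h _ (hV _) (hirr (Fin.last d)))
  exact_mod_cast h1

theorem aux_main {n : ℕ} (c2 : ℤ) (hc2 : c2 ≠ 0) (S : Set (Pt n)) (hS : S ⊆ Vset n c2)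
    (hirr : IsIrr S) : ringKrullDim (MvPolynomial (TVar n) ℂ ⧸ vId S) ≤ n := by
  have := vId_prime hirr
  set I := vId S with hI
  let B := MvPolynomial (TVar n) ℂ ⧸ I
  let K := FractionRing B
  let f : MvPolynomial (TVar n) ℂ →+* K := (algebraMap B K).comp (Ideal.Quotient.mk I)
  have f0 : ∀ q, f q = 0 ↔ ∀ x ∈ S, MvPolynomial.eval x q = 0 := by
    intro q
    rw [← mem_vId, ← hI, ← Ideal.Quotient.eq_zero_iff_mem]
    exact map_eq_zero_iff _ (IsFractionRing.injective B K)
  let rX : PairIdx n → MvPolynomial (TVar n) ℂ := fun p => MvPolynomial.X (Sum.inl p)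
  let zX : Fin n → MvPolynomial (TVar n) ℂ := fun p => MvPolynomial.X (Sum.inr (Sum.inl p))
  let dX : MvPolynomial (TVar n) ℂ := MvPolynomial.X (Sum.inr (Sum.inr (Sum.inl ())))
  let mX : Fin n → MvPolynomial (TVar n) ℂ := fun p => MvPolynomial.X (Sum.inr (Sum.inr (Sum.inr p)))
  have er : ∀ x : Pt n, (fun p => MvPolynomial.eval x (rX p)) = rPart x := fun x => by
    funext p; simp [rX, rPart]
  have ez : ∀ x : Pt n, (fun p => MvPolynomial.eval x (zX p)) = zPart x := fun x => by
    funext p; simp [zX, zPart]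
  have em : ∀ (x : Pt n) p, MvPolynomial.eval x (mX p) = mPart x p := fun x p => by
    simp [mX, mPart]
  have ed : ∀ (x : Pt n), MvPolynomial.eval x dX = dPart x := fun x => by
    simp [dX, dPart]
  obtain ⟨x0, hx0⟩ := hirr.1
  have hx0V := hS hx0
  have hnot : ∀ x ∈ S, x ∉ W1 n ∧ x ∉ W2 n ∧ x ∉ W3 n c2 := by
    intro x hx
    have := (hS hx).2
    simp only [Set.mem_union, not_or] at this
    tauto
  obtain ⟨w, hw⟩ := aux_field (K := K) c2 hc2 (fun p => f (rX p)) (fun p => f (zX p)) (f dX)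
    (fun p => f (mX p))
    (by
      intro p hp
      have h := (f0 _).1 hp x0 hx0
      refine (hnot x0 hx0).1 (Finset.prod_eq_zero (Finset.mem_univ p) ?_)
      rw [← er]; exact h)
    (by
      intro p
      rw [← map_gGe, f0]
      intro x hx
      rw [map_gGe, er, ez]
      exact (hS hx).1.1 p)
    (by
      rw [← map_gA, ← RingHom.map_det, f0]
      intro x hx
      rw [RingHom.map_det, map_gA, er]
      exact (hS hx).1.2.1)
    (by
      funext l
      have : ((gA (fun p => f (rX p))).mulVec (Fin.cons (f dX) (fun j => f (mX j) * f (zX j)) : Fin (n + 1) → K)) l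
          = f ((gA rX).mulVec (Fin.cons dX (fun j => mX j * zX j) : Fin (n + 1) → MvPolynomial (TVar n) ℂ) l) := by
        rw [← map_gA]
        simp [Matrix.mulVec, dotProduct, Fin.sum_univ_succ]
      rw [this, Pi.zero_apply, f0]
      intro x hx
      have hΓ := (hS hx).1.2.2 l
      have h2 : ∀ i j, MvPolynomial.eval x (gA rX i j) = gA (rPart x) i j := by
        intro i j
        rw [← er, ← map_gA]; rfl
      have h3 : ∀ p, MvPolynomial.eval x (zX p) = zPart x p := fun p => congrFun (ez x) p
      rw [← hΓ]
      simp only [Matrix.mulVec, dotProduct, Fin.sum_univ_succ, map_add, map_sum, map_mul, h2,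
        Fin.cons_zero, Fin.cons_succ, em, ed, h3]
      refine Fin.cases ?_ (fun l => ?_) l
      · simp [gA, GammaEval]
      · simp only [gA, GammaEval, Matrix.of_apply, Fin.cases_succ, Fin.cases_zero, one_mul]
        congr 1
        refine Finset.sum_congr rfl fun j _ => ?_
        rw [gR_symm, mul_comm]; rfl)
    (by
      by_contra hcon
      push Not at hcon
      refine (hnot x0 hx0).2.1 fun i j => ?_
      have h := hcon j i
      rw [← map_gA, ← RingHom.map_adjugate] at h
      have h2 := (f0 _).1 h x0 hx0
      have h3 : cmOf (rPart x0) = (MvPolynomial.eval x0).mapMatrix (gA rX) := by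
        rw [map_gA, er]; rfl
      rw [h3, ← RingHom.map_adjugate]
      exact h2)
    (by
      by_contra hcon
      push Not at hcon
      refine (hnot x0 hx0).2.2 fun i => ?_
      have h := hcon i
      rw [← map_gPsi] at h
      have h2 := (f0 _).1 h x0 hx0
      rw [map_gPsi, er, ez] at h2
      rw [Psi_eq, h2])
  let φ : Derivation ℂ K K →ₗ[K] (Fin n → K) :=
    { toFun := fun D j => D (w j)
      map_add' := fun _ _ => rfl
      map_smul' := fun _ _ => rfl }
  refine aux_krull_le (K := K) n φ fun D hD => ?_
  obtain ⟨h1, h2, h3, h4⟩ := hw D (fun j => congrFun hD j)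
  have hX : ∀ v : TVar n, D (f (MvPolynomial.X v)) = 0 := by
    rintro (p | p | ⟨⟩ | p)
    · exact h1 p
    · exact h2 p
    · exact h3
    · exact h4 p
  have hC : ∀ a : ℂ, f (MvPolynomial.C a) = algebraMap ℂ K a := fun a => rfl
  have hpoly : ∀ q, D (f q) = 0 := by
    intro q
    induction q using MvPolynomial.induction_on with
    | C a => rw [hC, D.map_algebraMap]
    | add p q hp hq => rw [map_add, map_add, hp, hq, add_zero]
    | mul_X p v hp => rw [map_mul, D.leibniz, hp, hX, smul_zero, smul_zero, add_zero]
  ext k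
  obtain ⟨a, b, hb, rfl⟩ := IsFractionRing.div_surjective (A := B) k
  obtain ⟨a, rfl⟩ := Ideal.Quotient.mk_surjective a
  obtain ⟨b, rfl⟩ := Ideal.Quotient.mk_surjective b
  have ha := hpoly a
  have hb := hpoly b
  simp only [f, RingHom.comp_apply] at ha hb
  rw [D.leibniz_div, ha, hb]
  simp

/-- For every nonzero semi-integer `a` (`c2 = 2a`), the quasi-affine
set `V^a ⊆ ℂ^{q+2n+1}` has dimension at most `n`. -/
theorem statement16 {n : ℕ} (hn : 3 ≤ n) (c2 : ℤ) (hc2 : c2 ≠ 0) :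
    DimLE (Vset n c2) n := by
  exact aux_dimLE _ _ fun S hS hirr => aux_main c2 hc2 S hS hirr
end

section
/- Let a be a semi-integer (2a ∈ ℤ, a ≠ 0) and let π : V^a → ℂ^n be the projection π(r, z, Δ_0, m) = m. Then there exists a Zariski-closed proper subset B̃ ⊊ ℂ^n such that for every m ∈ ℂ^n \ B̃ the fibre π^{−1}(m) = {(r, z, Δ_0) : (r, z, Δ_0, m) ∈ V^a} is a finite set. -/
open MvPolynomial

theorem derivation_prod {R A ι : Type*} [CommRing R] [CommRing A] [Algebra R A] [DecidableEq ι]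
    (D : Derivation R A A) (s : Finset ι) (f : ι → A) :
    D (∏ i ∈ s, f i) = ∑ i ∈ s, (∏ k ∈ s.erase i, f k) * D (f i) := by
  induction s using Finset.induction_on with
  | empty => simp
  | insert a s ha ih =>
    rw [Finset.prod_insert ha, Derivation.leibniz, ih, Finset.sum_insert ha,
      Finset.erase_insert ha, smul_eq_mul, smul_eq_mul, Finset.mul_sum, add_comm]
    congr 1
    refine Finset.sum_congr rfl fun i hi => ?_
    have hne : a ≠ i := fun h => ha (h ▸ hi)
    rw [Finset.erase_insert_of_ne hne, Finset.prod_insert (by simp [ha]), mul_assoc]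

theorem derivation_det {R A ι : Type*} [CommRing R] [CommRing A] [Algebra R A] [DecidableEq ι]
    [Fintype ι] (D : Derivation R A A) (M : Matrix ι ι A) :
    D M.det = ∑ i, ∑ j, M.adjugate i j * D (M j i) := by
  have h1 : ∀ i, ∑ j, M.adjugate i j * D (M j i) = (M.updateCol i (fun j => D (M j i))).det := by
    intro i
    rw [← Matrix.cramer_apply, Matrix.cramer_eq_adjugate_mulVec]
    rfl
  simp_rw [h1, Matrix.det_apply, map_sum]
  rw [Finset.sum_comm]
  refine Finset.sum_congr rfl fun σ _ => ?_
  rw [← Finset.smul_sum, Units.smul_def, Units.smul_def, map_zsmul, derivation_prod]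
  congr 1
  refine Finset.sum_congr rfl fun i _ => ?_
  rw [← Finset.mul_prod_erase Finset.univ _ (Finset.mem_univ i), mul_comm]
  congr 1
  · simp
  · refine Finset.prod_congr rfl fun k hk => ?_
    simp [Matrix.updateCol_ne (Finset.ne_of_mem_erase hk)]

theorem kernel_line {K ι : Type*} [Field K] [DecidableEq ι] [Fintype ι] (A : Matrix ι ι K)
    (a b : ι) (hab : A.adjugate a b ≠ 0) (u v : ι → K) (hu : A.mulVec u = 0)
    (hv : A.mulVec v = 0) (k : ι) : v a * u k = u a * v k := by
  have hdet : (A.updateRow b (Pi.single a 1)).det ≠ 0 := by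
    rwa [← Matrix.adjugate_apply]
  have key : (A.updateRow b (Pi.single a 1)).mulVec (v a • u - u a • v) = 0 := by
    funext k
    have h1 := congrFun hu k
    have h2 := congrFun hv k
    by_cases hk : k = b
    · subst hk
      simp [Matrix.mulVec, Matrix.updateRow_self, mul_comm]
    · have : (A.updateRow b (Pi.single a 1)).mulVec (v a • u - u a • v) k
          = A.mulVec (v a • u - u a • v) k := by
        simp [Matrix.mulVec, Matrix.updateRow_ne hk]
      rw [this, Matrix.mulVec_sub, Matrix.mulVec_smul, Matrix.mulVec_smul, hu, hv]
      simp
  have := Matrix.eq_zero_of_mulVec_eq_zero hdet key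
  have := congrFun this k
  simp [sub_eq_zero] at this
  exact this

open TensorProduct KaehlerDifferential in
open TensorProduct KaehlerDifferential IntermediateField.algebraAdjoinAdjoin in
theorem exists_derivation {L ι : Type} [Field L] [Algebra ℂ L] [DecidableEq ι] (x : ι → L)
    (hx : AlgebraicIndependent ℂ x) (i : ι) :
    ∃ D : Derivation ℂ L L, ∀ j, D (x j) = if j = i then 1 else 0 := by
  classical
  obtain ⟨t, hst, ht⟩ := exists_isTranscendenceBasis_superset (hx.coe_range)
  set y : t → L := Subtype.val with hy
  let S := Algebra.adjoin ℂ (Set.range y)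
  let K := IntermediateField.adjoin ℂ (Set.range y)
  have halg : Algebra.IsAlgebraic K L := ht.isAlgebraic_field
  have hsep : Algebra.IsSeparable K L := inferInstance
  have e1 : Algebra.FormallyEtale K L := Algebra.FormallyEtale.of_isSeparable K L
  have e2 : Algebra.FormallyEtale S K :=
    Algebra.FormallyEtale.of_isLocalization (Rₘ := K) (nonZeroDivisors S)
  have e3 : Algebra.FormallyEtale S L := Algebra.FormallyEtale.comp S K L
  let e : MvPolynomial t ℂ ≃ₐ[ℂ] S := ht.1.aevalEquiv
  let alg1 : Algebra (MvPolynomial t ℂ) S := (e : MvPolynomial t ℂ →ₐ[ℂ] S).toAlgebra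
  let alg2 : Algebra (MvPolynomial t ℂ) L := (aeval (R := ℂ) y).toAlgebra
  have t1 : IsScalarTower (MvPolynomial t ℂ) S L := IsScalarTower.of_algebraMap_eq fun p => rfl
  have t2 : IsScalarTower ℂ (MvPolynomial t ℂ) L := IsScalarTower.of_algebraMap_eq fun r => by
    simp [RingHom.algebraMap_toAlgebra]
  have e4 : Algebra.FormallyEtale (MvPolynomial t ℂ) S :=
    Algebra.FormallyEtale.of_equiv
      ({ e with commutes' := fun _ => rfl } : MvPolynomial t ℂ ≃ₐ[MvPolynomial t ℂ] S)
  have e5 : Algebra.FormallyEtale (MvPolynomial t ℂ) L := Algebra.FormallyEtale.comp _ S L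
  let d0 : Derivation ℂ (MvPolynomial t ℂ) L :=
    mkDerivation ℂ (fun j : t => if (j : L) = x i then (1 : L) else 0)
  let f : L ⊗[MvPolynomial t ℂ] Ω[MvPolynomial t ℂ⁄ℂ] →ₗ[L] L :=
    LinearMap.liftBaseChange L d0.liftKaehlerDifferential
  let D : Derivation ℂ L L :=
    (f ∘ₗ (tensorKaehlerEquivOfFormallyEtale ℂ (MvPolynomial t ℂ) L).symm.toLinearMap).compDer
      (KaehlerDifferential.D ℂ L)
  refine ⟨D, fun j => ?_⟩
  obtain ⟨w, hw⟩ : ∃ w : t, (w : L) = x j := ⟨⟨x j, hst ⟨j, rfl⟩⟩, rfl⟩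
  have hxj : x j = algebraMap (MvPolynomial t ℂ) L (X w) := by
    simp [RingHom.algebraMap_toAlgebra, hy, hw]
  have : D (x j) = d0 (X w) := by
    change f ((tensorKaehlerEquivOfFormallyEtale ℂ (MvPolynomial t ℂ) L).symm
      (KaehlerDifferential.D ℂ L (x j))) = _
    rw [hxj, tensorKaehlerEquivOfFormallyEtale_symm_D_algebraMap]
    simp [f]
  rw [this]
  simp only [d0, mkDerivation_X, hw, hx.injective.eq_iff]

theorem alg_exchange {L ι : Type} [Field L] [Algebra ℂ L] [Fintype ι] (m z : ι → L) (lam : L)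
    (hm : AlgebraicIndependent ℂ m) (hz : ¬ AlgebraicIndependent ℂ z)
    (h : ∀ i, IsAlgebraic (Algebra.adjoin ℂ (insert lam (Set.range z))) (m i)) :
    ∀ x ∈ insert lam (Set.range z), IsAlgebraic (Algebra.adjoin ℂ (Set.range m)) x := by
  classical
  set M := AlgebraicIndependent.matroid ℂ L with hM
  have hcl : ∀ (s : Set L) (x : L), x ∈ M.closure s ↔ IsAlgebraic (Algebra.adjoin ℂ s) x := by
    intro s x
    rw [hM, AlgebraicIndependent.matroid_closure_eq]
    simp [Subalgebra.mem_algebraicClosure]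
  have hsub : Set.range m ⊆ M.closure (insert lam (Set.range z)) := by
    rintro _ ⟨i, rfl⟩
    exact (hcl _ _).2 (h i)
  have hmi : M.Indep (Set.range m) := by
    rw [hM, AlgebraicIndependent.matroid_indep_iff]
    exact hm.coe_range
  have hcardm : M.eRk (Set.range m) = Fintype.card ι := by
    rw [hmi.eRk_eq_encard, ← Set.image_univ, hm.injective.encard_image]
    simp
  have hcardz : M.eRk (Set.range z) < Fintype.card ι := by
    by_contra hcon
    push Not at hcon
    have h1 : (Set.range z).encard ≤ Fintype.card ι := by
      rw [← Set.image_univ]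
      exact (Set.encard_image_le _ _).trans (by simp)
    have hfin : (Set.range z).Finite := Set.finite_range z
    have hind : M.Indep (Set.range z) :=
      (M.isRkFinite_of_finite hfin).indep_of_encard_le_eRk (h1.trans hcon)
    have hinj : Function.Injective z := by
      have h2 : (Fintype.card ι : ℕ∞) ≤ (Set.range z).encard := hcon.trans (M.eRk_le_encard _)
      have h3 : Fintype.card ι ≤ (Finset.univ.image z).card := by
        have : (Set.range z) = ((Finset.univ.image z : Finset L) : Set L) := by simp
        rw [this, Set.encard_coe_eq_coe_finsetCard] at h2
        exact_mod_cast h2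
      have h4 := le_antisymm h3 Finset.card_image_le
      have h5 := Finset.card_image_iff.1 h4.symm
      simpa using h5
    rw [hM, AlgebraicIndependent.matroid_indep_iff] at hind
    exact hz ((algebraicIndependent_subtype_range hinj).1 hind)
  have hle : M.eRk (M.closure (insert lam (Set.range z))) ≤ M.eRk (Set.range m) := by
    rw [M.eRk_closure_eq, hcardm]
    exact (M.eRk_insert_le_add_one _ _).trans (Order.add_one_le_of_lt hcardz)
  have := (M.isRkFinite_of_finite (Set.finite_range m)).closure_eq_closure_of_subset_of_eRk_ge_eRk
    hsub hle
  rw [M.closure_closure] at this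
  intro x hx
  rw [← hcl, this, hcl]
  exact isAlgebraic_algebraMap
    (⟨x, Algebra.subset_adjoin hx⟩ : Algebra.adjoin ℂ (insert lam (Set.range z)))

theorem isAlg_trans {L : Type} [Field L] [Algebra ℂ L] (s t : Set L)
    (h : ∀ x ∈ s, IsAlgebraic (Algebra.adjoin ℂ t) x) (x : L)
    (hx : IsAlgebraic (Algebra.adjoin ℂ s) x) : IsAlgebraic (Algebra.adjoin ℂ t) x := by
  set M := AlgebraicIndependent.matroid ℂ L with hM
  have hcl : ∀ (s : Set L) (x : L), x ∈ M.closure s ↔ IsAlgebraic (Algebra.adjoin ℂ s) x := by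
    intro s x
    rw [hM, AlgebraicIndependent.matroid_closure_eq]
    simp [Subalgebra.mem_algebraicClosure]
  rw [← hcl] at hx ⊢
  have h1 : s ⊆ M.closure t := fun y hy => (hcl _ _).2 (h y hy)
  have := M.closure_subset_closure h1
  rw [M.closure_closure] at this
  exact this hx

section generic
variable {n : ℕ} {K : Type} [CommRing K]

/-- `r_{ij}` over a general ring. -/
def rK (r : PairIdx n → K) (i j : Fin n) : K :=
  if h : i < j then r ⟨(i, j), h⟩ else if h' : j < i then r ⟨(j, i), h'⟩ else 0

/-- Cayley-Menger matrix over a general ring. -/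
def cmK (r : PairIdx n → K) : Matrix (Fin (n + 1)) (Fin (n + 1)) K :=
  Matrix.of fun i j =>
    Fin.cases (Fin.cases 0 (fun _ => 1) j)
      (fun i' => Fin.cases 1 (fun j' => rK r i' j' ^ 2) j) i

theorem rK_symm (r : PairIdx n → K) (i j : Fin n) : rK r i j = rK r j i := by
  unfold rK
  rcases lt_trichotomy i j with h | h | h
  · simp [h, h.not_gt]
  · simp [h]
  · simp [h, h.not_gt]

theorem rK_self (r : PairIdx n → K) (i : Fin n) : rK r i i = 0 := by
  simp [rK]

theorem rK_map {K' : Type} [CommRing K'] (f : K →+* K') (r : PairIdx n → K) (i j : Fin n) :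
    f (rK r i j) = rK (fun p => f (r p)) i j := by
  unfold rK
  split_ifs <;> simp

theorem cmK_map {K' : Type} [CommRing K'] (f : K →+* K') (r : PairIdx n → K) :
    f.mapMatrix (cmK r) = cmK (fun p => f (r p)) := by
  ext i j
  refine Fin.cases ?_ (fun i => ?_) i <;> refine Fin.cases ?_ (fun j => ?_) j <;>
    simp [cmK, rK_map]

theorem cmK_transpose (r : PairIdx n → K) : (cmK r).transpose = cmK r := by
  ext i j
  refine Fin.cases ?_ (fun i => ?_) i <;> refine Fin.cases ?_ (fun j => ?_) j <;>
    simp [cmK, rK_symm r]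

theorem adj_symm (r : PairIdx n → K) (i j) : (cmK r).adjugate i j = (cmK r).adjugate j i := by
  conv_lhs => rw [← cmK_transpose, ← Matrix.adjugate_transpose]
  rfl

theorem derivation_cm [Algebra ℂ K] (D : Derivation ℂ K K) (r : PairIdx n → K) :
    D (cmK r).det = ∑ k : Fin n, ∑ l : Fin n,
      (cmK r).adjugate k.succ l.succ * (2 * rK r k l * D (rK r k l)) := by
  rw [derivation_det, Fin.sum_univ_succ, Fin.sum_univ_succ]
  have h0 : ∀ i j, D (cmK r 0 (Fin.succ j)) = 0 ∧ D (cmK r (Fin.succ i) 0) = 0 ∧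
      D (cmK r 0 0) = 0 := by
    intro i j
    simp [cmK]
  have h00 : D (cmK r 0 0) = 0 := by simp [cmK]
  simp only [h00, mul_zero, zero_add, fun i : Fin n => (h0 i i).2.1, Finset.sum_const_zero]
  refine Finset.sum_congr rfl fun k _ => ?_
  rw [Fin.sum_univ_succ, (h0 k k).1, mul_zero, zero_add]
  refine Finset.sum_congr rfl fun l _ => ?_
  have : cmK r l.succ k.succ = rK r k l ^ 2 := by simp [cmK, rK_symm r l k]
  rw [this, Derivation.leibniz_pow]
  simp
  ring

theorem dF_lt (i j : Fin n) (h : i < j) :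
    (dF i j : MvPolynomial (PairIdx n) ℂ) =
      4 * rK X i j * (cmK (X : PairIdx n → MvPolynomial (PairIdx n) ℂ)).adjugate
        i.succ j.succ := by
  have h1 : (dF i j : MvPolynomial (PairIdx n) ℂ) =
      pderiv (⟨(i, j), h⟩ : PairIdx n)
        (cmK (X : PairIdx n → MvPolynomial (PairIdx n) ℂ)).det := by
    simp only [dF, h, dif_pos]
    rfl
  rw [h1, derivation_cm]
  have h2 : ∀ k l : Fin n, pderiv (⟨(i, j), h⟩ : PairIdx n)
      (rK (X : PairIdx n → MvPolynomial (PairIdx n) ℂ) k l) =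
      (if k = i then (if l = j then 1 else 0) else 0) +
      (if k = j then (if l = i then 1 else 0) else 0) := by
    intro k l
    unfold rK
    split_ifs <;> simp_all [pderiv_X, Subtype.ext_iff, Prod.ext_iff] <;>
      omega
  simp only [h2, mul_add, Finset.sum_add_distrib, mul_ite, mul_one, mul_zero,
    Finset.sum_ite_eq', Finset.sum_ite_irrel, Finset.sum_const_zero, Finset.mem_univ, if_true]
  rw [rK_symm X j i, adj_symm X j.succ i.succ]
  ring

theorem dF_symm (i j : Fin n) : (dF i j : MvPolynomial (PairIdx n) ℂ) = dF j i := by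
  unfold dF
  rcases lt_trichotomy i j with h | h | h
  · simp [h, h.not_gt]
  · simp [h]
  · simp [h, h.not_gt]

theorem dF_eq (i j : Fin n) :
    (dF i j : MvPolynomial (PairIdx n) ℂ) =
      4 * rK X i j * (cmK (X : PairIdx n → MvPolynomial (PairIdx n) ℂ)).adjugate
        i.succ j.succ := by
  rcases lt_trichotomy i j with h | h | h
  · exact dF_lt i j h
  · simp [h, dF, rK_self]
  · rw [dF_symm, dF_lt j i h, rK_symm, adj_symm]

theorem aeval_dF [Algebra ℂ K] (r : PairIdx n → K) (i j : Fin n) :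
    aeval r (dF i j) = 4 * rK r i j * (cmK r).adjugate i.succ j.succ := by
  have h1 := rK_map (aeval (R := ℂ) r : MvPolynomial (PairIdx n) ℂ →+* K) X i j
  have h2 := cmK_map (aeval (R := ℂ) r : MvPolynomial (PairIdx n) ℂ →+* K) X
  have h3 := RingHom.map_adjugate (aeval (R := ℂ) r : MvPolynomial (PairIdx n) ℂ →+* K) (cmK X)
  rw [h2] at h3
  have h4 := congrFun (congrFun h3 i.succ) j.succ
  simp only [RingHom.mapMatrix_apply, Matrix.map_apply, RingHom.coe_coe, aeval_X] at h1 h4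
  rw [dF_eq, map_mul, map_mul, h1, h4]
  simp

theorem psi_zero [IsDomain K] [Algebra ℂ K] (D : Derivation ℂ K K) (r : PairIdx n → K)
    (z : Fin n → K) (i : Fin n) (hD : ∀ j, D (z j) = if j = i then 1 else 0)
    (hdet : (cmK r).det = 0) (C : K) (W : Fin n → Fin n → K) (hWs : ∀ k l, W k l = W l k)
    (hW : ∀ k l, k ≠ l → C * D (rK r k l) = W k l * (z k * D (z l) + z l * D (z k))) :
    ∑ j ∈ Finset.univ \ {i},
      W i j * (4 * rK r i j * (cmK r).adjugate i.succ j.succ) * z j = 0 := by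
  have h0 : C * D (cmK r).det = 0 := by rw [hdet]; simp
  rw [derivation_cm, Finset.mul_sum] at h0
  simp only [Finset.mul_sum] at h0
  have h1 : ∀ k l : Fin n, C * ((cmK r).adjugate k.succ l.succ * (2 * rK r k l * D (rK r k l))) =
      (if l = i then (cmK r).adjugate k.succ l.succ * 2 * rK r k l * W k l * z k else 0) +
      (if k = i then (cmK r).adjugate k.succ l.succ * 2 * rK r k l * W k l * z l else 0) := by
    intro k l
    by_cases hkl : k = l
    · subst hkl; simp [rK_self]
    · have := hW k l hkl
      rw [hD, hD] at this
      have e : C * ((cmK r).adjugate k.succ l.succ * (2 * rK r k l * D (rK r k l))) =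
        (cmK r).adjugate k.succ l.succ * (2 * rK r k l) * (C * D (rK r k l)) := by ring
      rw [e, this]
      split_ifs <;> ring
  simp only [h1, Finset.sum_add_distrib, Finset.sum_ite_eq', Finset.sum_ite_irrel,
    Finset.sum_const_zero, Finset.mem_univ, if_true] at h0
  rw [← h0, ← Finset.sum_add_distrib, Finset.sum_subset (Finset.subset_univ _)]
  · refine Finset.sum_congr rfl fun j _ => ?_
    rw [adj_symm r j.succ, rK_symm r j i, hWs j i]
    ring
  · intro x _ hx
    have : x = i := by simpa using hx
    subst this
    simp [rK_self]

end generic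

section core
variable {n : ℕ} {K : Type} [CommRing K]

/-- `Ψ` over a general algebra. -/
noncomputable def PsiK [Algebra ℂ K] (c2 : ℤ) (r : PairIdx n → K) (z : Fin n → K) (i : Fin n) : K :=
  if c2 < 0 then
    ∑ j ∈ Finset.univ \ {i}, rK r i j ^ (1 - c2).toNat * aeval r (dF i j) * z j
  else
    ∑ j ∈ Finset.univ \ {i},
      (∏ p ∈ Finset.univ.filter
          (fun p : PairIdx n => ¬((p.1.1 = i ∧ p.1.2 = j) ∨ (p.1.1 = j ∧ p.1.2 = i))),
        r p ^ (c2 - 1).toNat) * aeval r (dF i j) * z j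

/-- `g` over a general ring. -/
def gK (c2 : ℤ) (r : PairIdx n → K) (z : Fin n → K) (p : PairIdx n) : K :=
  if 0 < c2 then r p ^ c2.toNat - 1 - z p.1.1 * z p.1.2
  else r p ^ (-c2).toNat * (z p.1.1 * z p.1.2 + 1) - 1

theorem gK_rK (c2 : ℤ) (r : PairIdx n → K) (z : Fin n → K) (hg : ∀ p, gK c2 r z p = 0)
    (k l : Fin n) (hkl : k ≠ l) :
    (if 0 < c2 then rK r k l ^ c2.toNat - 1 - z k * z l
      else rK r k l ^ (-c2).toNat * (z k * z l + 1) - 1) = 0 := by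
  rcases lt_or_gt_of_ne hkl with h | h
  · simpa [gK, rK, h] using hg ⟨(k, l), h⟩
  · have := hg ⟨(l, k), h⟩
    simpa [gK, rK, h, h.not_gt, mul_comm (z k)] using this

theorem prod_rK (r : PairIdx n → K) (e : ℕ) (k l : Fin n) (hkl : k ≠ l) :
    ∏ p, r p ^ e = rK r k l ^ e * ∏ p ∈ Finset.univ.filter
          (fun p : PairIdx n => ¬((p.1.1 = k ∧ p.1.2 = l) ∨ (p.1.1 = l ∧ p.1.2 = k))),
        r p ^ e := by
  classical
  rw [← Finset.prod_filter_mul_prod_filter_not Finset.univ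
    (fun p : PairIdx n => (p.1.1 = k ∧ p.1.2 = l) ∨ (p.1.1 = l ∧ p.1.2 = k))]
  congr 1
  rcases lt_or_gt_of_ne hkl with h | h
  · have : Finset.univ.filter
      (fun p : PairIdx n => (p.1.1 = k ∧ p.1.2 = l) ∨ (p.1.1 = l ∧ p.1.2 = k)) =
        {⟨(k, l), h⟩} := by
      ext ⟨⟨a, b⟩, hab⟩
      simp only [Finset.mem_filter, Finset.mem_univ, true_and, Finset.mem_singleton,
        Subtype.mk.injEq, Prod.mk.injEq]
      simp only at hab
      constructor
      · rintro (h1 | ⟨rfl, rfl⟩)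
        · exact h1
        · exact absurd h hab.not_gt
      · exact Or.inl
    rw [this, Finset.prod_singleton]
    simp [rK, h]
  · have : Finset.univ.filter
      (fun p : PairIdx n => (p.1.1 = k ∧ p.1.2 = l) ∨ (p.1.1 = l ∧ p.1.2 = k)) =
        {⟨(l, k), h⟩} := by
      ext ⟨⟨a, b⟩, hab⟩
      simp only [Finset.mem_filter, Finset.mem_univ, true_and, Finset.mem_singleton,
        Subtype.mk.injEq, Prod.mk.injEq]
      simp only at hab
      constructor
      · rintro (⟨rfl, rfl⟩ | h1)
        · exact absurd h hab.not_gt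
        · exact h1
      · exact Or.inr
    rw [this, Finset.prod_singleton]
    simp [rK, h, h.not_gt]

theorem PsiK_zero_of_derivation [Algebra ℂ K] [IsDomain K] (c2 : ℤ) (hc2 : c2 ≠ 0) (D : Derivation ℂ K K)
    (r : PairIdx n → K) (z : Fin n → K) (hg : ∀ p, gK c2 r z p = 0)
    (hdet : (cmK r).det = 0)
    (i : Fin n) (hD : ∀ j, D (z j) = if j = i then 1 else 0) : PsiK c2 r z i = 0 := by
  unfold PsiK
  simp only [aeval_dF]
  rcases lt_or_gt_of_ne hc2 with h | h
  · rw [if_pos h]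
    obtain ⟨c, hc⟩ : ∃ c : ℕ, c2 = -((c : ℤ) + 1) := ⟨(-c2 - 1).toNat, by omega⟩
    have e1 : (1 - c2).toNat = c + 2 := by omega
    have e2 : (-c2).toNat = c + 1 := by omega
    have := psi_zero D r z i hD hdet (-((c : K) + 1)) (fun k l => rK r k l ^ (c + 2))
      (fun k l => by rw [rK_symm]) (by
        intro k l hkl
        have hh := gK_rK c2 r z hg k l hkl
        rw [if_neg h.not_gt, e2] at hh
        have h2 := congrArg D hh
        simp only [map_sub, map_zero, Derivation.leibniz, Derivation.leibniz_pow, map_add,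
          Derivation.map_one_eq_zero, smul_eq_mul, nsmul_eq_mul, Nat.add_sub_cancel] at h2
        push_cast at h2
        linear_combination (((c : K) + 1) * D (rK r k l)) * hh + (- rK r k l) * h2)
    rw [e1]
    exact this
  · rw [if_neg h.not_gt]
    obtain ⟨c, hc⟩ : ∃ c : ℕ, c2 = (c : ℤ) + 1 := ⟨(c2 - 1).toNat, by omega⟩
    have e1 : (c2 - 1).toNat = c := by omega
    have e2 : c2.toNat = c + 1 := by omega
    rw [e1]
    refine psi_zero D r z i hD hdet (((c : K) + 1) * ∏ p, r p ^ c)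
      (fun k l => ∏ p ∈ Finset.univ.filter
          (fun p : PairIdx n => ¬((p.1.1 = k ∧ p.1.2 = l) ∨ (p.1.1 = l ∧ p.1.2 = k))),
        r p ^ c) (fun k l => by simp only [or_comm]) ?_
    intro k l hkl
    have hh := gK_rK c2 r z hg k l hkl
    rw [if_pos h, e2] at hh
    have h2 := congrArg D hh
    simp only [map_sub, map_zero, Derivation.leibniz, Derivation.leibniz_pow,
      Derivation.map_one_eq_zero, smul_eq_mul, nsmul_eq_mul, Nat.add_sub_cancel] at h2
    push_cast at h2
    rw [prod_rK r c k l hkl]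
    linear_combination (∏ p ∈ Finset.univ.filter
          (fun p : PairIdx n => ¬((p.1.1 = k ∧ p.1.2 = l) ∨ (p.1.1 = l ∧ p.1.2 = k))),
        r p ^ c) * h2

end core

theorem core_algebraic {n : ℕ} {L : Type} [Field L] [Algebra ℂ L] (c2 : ℤ) (hc2 : c2 ≠ 0)
    (r : PairIdx n → L) (z m : Fin n → L) (d : L) (hg : ∀ p, gK c2 r z p = 0)
    (hdet : (cmK r).det = 0) (hG0 : ∑ j, m j * z j = 0)
    (hG : ∀ l, d + ∑ j, m j * z j * rK r j l ^ 2 = 0)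
    (hadj : ∃ a b, (cmK r).adjugate a b ≠ 0)
    (hPsi : ∃ i, PsiK c2 r z i ≠ 0) (hm : AlgebraicIndependent ℂ m) :
    (∀ p, IsAlgebraic (Algebra.adjoin ℂ (Set.range m)) (r p)) ∧
    (∀ i, IsAlgebraic (Algebra.adjoin ℂ (Set.range m)) (z i)) ∧
    IsAlgebraic (Algebra.adjoin ℂ (Set.range m)) d := by
  classical
  obtain ⟨a, b, hab⟩ := hadj
  have hmne : ∀ j, m j ≠ 0 := fun j => hm.ne_zero j
  -- the two kernel vectors
  set u : Fin (n + 1) → L := Fin.cons d (fun j => m j * z j) with hu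
  have hAu : (cmK r).mulVec u = 0 := by
    funext k
    refine Fin.cases ?_ (fun l => ?_) k
    · simp [Matrix.mulVec, dotProduct, Fin.sum_univ_succ, cmK, hu, hG0]
    · rw [Pi.zero_apply, ← hG l]
      simp only [Matrix.mulVec, dotProduct, Fin.sum_univ_succ, cmK, hu, Matrix.of_apply,
        Fin.cases_zero, Fin.cases_succ, Fin.cons_zero, Fin.cons_succ, one_mul]
      congr 1
      refine Finset.sum_congr rfl fun j _ => ?_
      rw [rK_symm, mul_comm]
  have hAadj : ∀ c, (cmK r).mulVec (fun k => (cmK r).adjugate k c) = 0 := by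
    intro c
    have h1 := Matrix.mul_adjugate (cmK r)
    rw [hdet, zero_smul] at h1
    funext k
    exact congrFun (congrFun h1 k) c
  set v : Fin (n + 1) → L := fun k => (cmK r).adjugate k b with hv
  have hva : v a ≠ 0 := hab
  set lam : L := u a / v a with hlam
  have huv : ∀ k, u k = lam * v k := by
    intro k
    have := kernel_line (cmK r) a b hab u v hAu (hAadj b) k
    rw [hlam]
    field_simp
    rw [← this]
    ring
  -- some z is nonzero
  obtain ⟨i0, hi0⟩ := hPsi
  have hznz : ∃ j, z j ≠ 0 := by
    by_contra hcon
    push Not at hcon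
    apply hi0
    unfold PsiK
    simp [hcon]
  have hlam0 : lam ≠ 0 := by
    obtain ⟨j, hj⟩ := hznz
    intro h0
    have := huv j.succ
    rw [h0, zero_mul] at this
    simp [hu, hmne, hj] at this
  -- z j = 0 kills the row of the adjugate
  have hrow : ∀ j, z j = 0 → ∀ c, (cmK r).adjugate j.succ c = 0 := by
    intro j hj c
    have h1 := huv j.succ
    have h2 : u j.succ = 0 := by simp [hu, hj]
    rw [h2] at h1
    have h3 : v j.succ = 0 := by
      rcases mul_eq_zero.1 h1.symm with h | h
      · exact absurd h hlam0
      · exact h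
    have := kernel_line (cmK r) a b hab (fun k => (cmK r).adjugate k c) v (hAadj c) (hAadj b)
      j.succ
    rw [h3, mul_zero] at this
    rcases mul_eq_zero.1 this with h | h
    · exact absurd h hva
    · exact h
  have hPsi_z : z i0 ≠ 0 := by
    intro h0
    apply hi0
    unfold PsiK
    simp [aeval_dF, hrow i0 h0]
  let T := {j : Fin n // z j ≠ 0}
  let zT : T → L := fun j => z j
  let mT : T → L := fun j => m j
  have hmT : AlgebraicIndependent ℂ mT := hm.comp _ Subtype.val_injective
  have hzT : ¬ AlgebraicIndependent ℂ zT := by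
    intro hind
    obtain ⟨D, hD⟩ := exists_derivation zT hind ⟨i0, hPsi_z⟩
    apply hi0
    refine PsiK_zero_of_derivation c2 hc2 D r z hg hdet i0 fun j => ?_
    by_cases hj : z j = 0
    · have : j ≠ i0 := fun h => hPsi_z (h ▸ hj)
      simp [hj, this]
    · have := hD ⟨j, hj⟩
      exact this.trans (if_congr
        ⟨fun h => congrArg Subtype.val h, fun h => Subtype.ext h⟩ rfl rfl)
  set s : Set L := insert lam (Set.range zT) with hs
  have hmem : ∀ x ∈ s, IsAlgebraic (Algebra.adjoin ℂ s) x := fun x hx =>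
    isAlgebraic_algebraMap (⟨x, Algebra.subset_adjoin hx⟩ : Algebra.adjoin ℂ s)
  have hzs : ∀ j, IsAlgebraic (Algebra.adjoin ℂ s) (z j) := by
    intro j
    by_cases hj : z j = 0
    · rw [hj]; exact isAlgebraic_zero
    · exact hmem _ (Or.inr ⟨⟨j, hj⟩, rfl⟩)
  have hrs : ∀ p, IsAlgebraic (Algebra.adjoin ℂ s) (r p) := by
    intro p
    have hp := hg p
    unfold gK at hp
    have hzz : IsAlgebraic (Algebra.adjoin ℂ s) (z p.1.1 * z p.1.2 + 1) :=
      ((hzs _).mul (hzs _)).add isAlgebraic_one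
    split_ifs at hp with h
    · have h1 : r p ^ c2.toNat = z p.1.1 * z p.1.2 + 1 := by linear_combination hp
      exact IsAlgebraic.of_pow (n := c2.toNat) (by omega) (h1 ▸ hzz)
    · have h1 : r p ^ (-c2).toNat = (z p.1.1 * z p.1.2 + 1)⁻¹ :=
        eq_inv_of_mul_eq_one_left (by linear_combination hp)
      exact IsAlgebraic.of_pow (n := (-c2).toNat) (by omega) (h1 ▸ hzz.inv)
  have hvs : ∀ k, IsAlgebraic (Algebra.adjoin ℂ s) (v k) := by
    intro k
    let S := Subalgebra.algebraicClosure (Algebra.adjoin ℂ s) L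
    let r' : PairIdx n → S := fun p => ⟨r p, (Subalgebra.mem_algebraicClosure _ _).2 (hrs p)⟩
    have h1 : cmK r = (S.val : S →+* L).mapMatrix (cmK r') := by
      rw [cmK_map]; rfl
    have h2 : v k = (S.val : S →+* L) ((cmK r').adjugate k b) := by
      simp only [hv]
      rw [h1, ← RingHom.map_adjugate]
      rfl
    rw [h2]
    exact (Subalgebra.mem_algebraicClosure _ _).1 ((cmK r').adjugate k b).2
  have hms : ∀ j : T, IsAlgebraic (Algebra.adjoin ℂ s) (mT j) := by
    rintro ⟨j, hj⟩
    have h1 : m j = lam * v j.succ * (z j)⁻¹ := by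
      rw [← huv]
      simp [hu, hj]
    change IsAlgebraic _ (m j)
    rw [h1]
    exact ((hmem _ (Or.inl rfl)).mul (hvs _)).mul (hzs j).inv
  have hfin := alg_exchange mT zT lam hmT hzT hms
  have hfin' : ∀ x ∈ s, IsAlgebraic (Algebra.adjoin ℂ (Set.range m)) x := by
    intro x hx
    refine isAlg_trans (Set.range mT) _ ?_ x (hfin x hx)
    rintro _ ⟨j, rfl⟩
    exact isAlgebraic_algebraMap
      (⟨m j, Algebra.subset_adjoin ⟨_, rfl⟩⟩ : Algebra.adjoin ℂ (Set.range m))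
  refine ⟨fun p => isAlg_trans s _ hfin' _ (hrs p), fun i => isAlg_trans s _ hfin' _ (hzs i),
    isAlg_trans s _ hfin' _ ?_⟩
  have h1 : d = lam * v 0 := by
    rw [← huv]; simp [hu]
  rw [h1]
  exact (hmem _ (Or.inl rfl)).mul (hvs 0)

section final
variable {n : ℕ}

theorem gK_map {K K' : Type} [CommRing K] [CommRing K'] (f : K →+* K') (c2 : ℤ)
    (r : PairIdx n → K) (z : Fin n → K) (p : PairIdx n) :
    f (gK c2 r z p) = gK c2 (fun p => f (r p)) (fun i => f (z i)) p := by
  unfold gK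
  split_ifs <;> simp

theorem PsiK_map {K K' : Type} [CommRing K] [CommRing K'] [Algebra ℂ K] [Algebra ℂ K']
    (f : K →ₐ[ℂ] K') (c2 : ℤ) (r : PairIdx n → K) (z : Fin n → K) (i : Fin n) :
    f (PsiK c2 r z i) = PsiK c2 (fun p => f (r p)) (fun i => f (z i)) i := by
  have h1 : ∀ i j, f (rK r i j) = rK (fun p => f (r p)) i j := rK_map (f : K →+* K') r
  have h2 : ∀ q, f (aeval (R := ℂ) r q) = aeval (R := ℂ) (fun p => f (r p)) q := by
    intro q
    rw [← AlgHom.comp_apply, comp_aeval]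
  unfold PsiK
  split_ifs <;> simp [h1, h2]

theorem adj_map {K K' : Type} [CommRing K] [CommRing K'] (f : K →+* K')
    (r : PairIdx n → K) (a b : Fin (n + 1)) :
    f ((cmK r).adjugate a b) = (cmK (fun p => f (r p))).adjugate a b := by
  rw [← cmK_map, ← RingHom.map_adjugate]
  rfl

theorem det_map {K K' : Type} [CommRing K] [CommRing K'] (f : K →+* K')
    (r : PairIdx n → K) : f (cmK r).det = (cmK (fun p => f (r p))).det := by
  rw [← cmK_map, ← RingHom.map_det]

/-- The polynomial ring of the ambient space. -/
abbrev PolyA (n : ℕ) := MvPolynomial (TVar n) ℂ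

/-- Generic point, `r`-part. -/
noncomputable def rX (n : ℕ) : PairIdx n → PolyA n := fun p => X (Sum.inl p)
/-- Generic point, `z`-part. -/
noncomputable def zX (n : ℕ) : Fin n → PolyA n := fun i => X (Sum.inr (Sum.inl i))
/-- Generic point, `Δ`-part. -/
noncomputable def dX (n : ℕ) : PolyA n := X (Sum.inr (Sum.inr (Sum.inl ())))
/-- Generic point, `m`-part. -/
noncomputable def mX (n : ℕ) : Fin n → PolyA n := fun i => X (Sum.inr (Sum.inr (Sum.inr i)))

/-- The generators of the ideal of `Ṽ`. -/
def gens (n : ℕ) (c2 : ℤ) : Set (PolyA n) :=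
  Set.range (gK c2 (rX n) (zX n)) ∪ {(cmK (rX n)).det} ∪ {∑ j, mX n j * zX n j} ∪
    Set.range (fun l => dX n + ∑ j, mX n j * zX n j * rK (rX n) j l ^ 2)

theorem eval_gens (c2 : ℤ) (P : Pt n) (hP : P ∈ Vtilde n c2) (g : PolyA n)
    (hg : g ∈ gens n c2) : eval P g = 0 := by
  obtain ⟨h1, h2, h3⟩ := hP
  rcases hg with ((⟨p, rfl⟩ | rfl) | rfl) | ⟨l, rfl⟩
  · rw [gK_map]
    simp only [rX, zX, eval_X]
    exact h1 p
  · rw [det_map]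
    simp only [rX, eval_X]
    exact h2
  · simp only [mX, zX, map_sum, map_mul, eval_X]
    exact h3 0
  · have := h3 l.succ
    simp only [map_add, map_sum, map_mul, map_pow, rK_map]
    simp only [rX, mX, zX, dX, eval_X]
    exact this

theorem prime_piece (c2 : ℤ) (hc2 : c2 ≠ 0) (q : Ideal (PolyA n)) [hq : q.IsPrime]
    (hI : gens n c2 ⊆ q) :
    ∃ f : MvPolynomial (Fin n) ℂ, f ≠ 0 ∧ ∀ m, eval m f ≠ 0 →
      {P : Pt n | P ∈ Vset n c2 ∧ (∀ g ∈ q, eval P g = 0) ∧ mPart P = m}.Finite := by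
  classical
  by_cases hne : ∃ P0 ∈ Vset n c2, ∀ g ∈ q, eval P0 g = 0
  swap
  · refine ⟨1, one_ne_zero, fun m _ => ?_⟩
    convert Set.finite_empty
    ext P
    simp only [Set.mem_ofPred_eq, Set.mem_empty_iff_false, iff_false]
    exact fun h => hne ⟨P, h.1, h.2.1⟩
  have hevm : ∀ (P : Pt n) (f : MvPolynomial (Fin n) ℂ),
      eval P (aeval (mX n) f) = eval (mPart P) f := by
    intro P f
    have : ((aeval (R := ℂ) P).comp (aeval (mX n))) = aeval (R := ℂ) (mPart P) := by
      ext i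
      simp [mX, mPart]
    exact DFunLike.congr_fun this f
  by_cases hdep : ∃ f : MvPolynomial (Fin n) ℂ, f ≠ 0 ∧ aeval (mX n) f ∈ q
  · obtain ⟨f, hf0, hf⟩ := hdep
    refine ⟨f, hf0, fun m hm => ?_⟩
    convert Set.finite_empty
    ext P
    simp only [Set.mem_ofPred_eq, Set.mem_empty_iff_false, iff_false]
    rintro ⟨-, h1, rfl⟩
    apply hm
    rw [← hevm]
    exact h1 _ hf
  let L := FractionRing (PolyA n ⧸ q)
  let φ : PolyA n →ₐ[ℂ] L :=
    (IsScalarTower.toAlgHom ℂ (PolyA n ⧸ q) L).comp (Ideal.Quotient.mkₐ ℂ q)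
  have hφ : ∀ g, φ g = 0 ↔ g ∈ q := by
    intro g
    have : φ g = algebraMap (PolyA n ⧸ q) L (Ideal.Quotient.mk q g) := rfl
    rw [this, ← Ideal.Quotient.eq_zero_iff_mem]
    exact (IsFractionRing.injective (PolyA n ⧸ q) L).eq_iff' (map_zero _)
  obtain ⟨P0, hP0, hP0q⟩ := hne
  have hW1 := fun h => hP0.2 (Or.inl (Or.inl h))
  have hW2 := fun h => hP0.2 (Or.inl (Or.inr h))
  have hW3 := fun h => hP0.2 (Or.inr h)
  have hm : AlgebraicIndependent ℂ (fun i => φ (mX n i)) := by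
    rw [algebraicIndependent_iff]
    intro f hf
    by_contra hf0
    apply hdep
    refine ⟨f, hf0, ?_⟩
    rw [← hφ, ← AlgHom.comp_apply, comp_aeval]
    exact hf
  have hadj : ∃ a b, (cmK (fun p => φ (rX n p))).adjugate a b ≠ 0 := by
    by_contra hcon
    push Not at hcon
    apply hW2
    intro i j
    have h1 := hcon j i
    have h2 := adj_map (φ : PolyA n →+* L) (rX n) j i
    have h3 : (cmK (rX n)).adjugate j i ∈ q := by
      rw [← hφ]
      exact h2.trans h1
    have h4 := hP0q _ h3
    rw [adj_map] at h4
    simp only [rX, eval_X] at h4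
    exact h4
  have hPsi : ∃ i, PsiK c2 (fun p => φ (rX n p)) (fun i => φ (zX n i)) i ≠ 0 := by
    by_contra hcon
    push Not at hcon
    apply hW3
    intro i
    have h1 := hcon i
    rw [← PsiK_map, hφ] at h1
    have h4 := hP0q _ h1
    have h5 := PsiK_map (aeval (R := ℂ) P0) c2 (rX n) (zX n) i
    have h6 : PsiK c2 (fun p => aeval (R := ℂ) P0 (rX n p)) (fun i => aeval (R := ℂ) P0 (zX n i)) i
      = 0 := h5.symm.trans h4
    simp only [rX, zX, aeval_X] at h6
    exact h6
  have hgen : ∀ g ∈ gens n c2, φ g = 0 := fun g hg => (hφ g).2 (hI hg)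
  have hcore := core_algebraic c2 hc2 (fun p => φ (rX n p)) (fun i => φ (zX n i))
    (fun i => φ (mX n i)) (φ (dX n))
    (fun p => (gK_map (φ : PolyA n →+* L) c2 (rX n) (zX n) p).symm.trans
      (hgen _ (Or.inl (Or.inl (Or.inl ⟨p, rfl⟩)))))
    ((det_map (φ : PolyA n →+* L) (rX n)).symm.trans (hgen _ (Or.inl (Or.inl (Or.inr rfl)))))
    (by simpa using hgen _ (Or.inl (Or.inr rfl)))
    (fun l => by
      have h1 := hgen _ (Or.inr ⟨l, rfl⟩)
      have h2 : ∀ j, φ (rK (rX n) j l) = rK (fun p => φ (rX n p)) j l :=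
        fun j => rK_map (φ : PolyA n →+* L) (rX n) j l
      simpa [h2] using h1)
    hadj hPsi hm
  have hall : ∀ t : TVar n,
      IsAlgebraic (Algebra.adjoin ℂ (Set.range fun i => φ (mX n i))) (φ (X t)) := by
    rintro (p | i | ⟨⟩ | i)
    · exact hcore.1 p
    · exact hcore.2.1 i
    · exact hcore.2.2
    · exact isAlgebraic_algebraMap
        (⟨φ (mX n i), Algebra.subset_adjoin ⟨i, rfl⟩⟩ :
          Algebra.adjoin ℂ (Set.range fun i => φ (mX n i)))
  have hpoly : ∀ t : TVar n, ∃ c : Polynomial (MvPolynomial (Fin n) ℂ), c ≠ 0 ∧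
      c.eval₂ (aeval (R := ℂ) (mX n) : MvPolynomial (Fin n) ℂ →+* PolyA n) (X t) ∈ q := by
    intro t
    obtain ⟨c, hc0, hc⟩ := hall t
    let e := hm.aevalEquiv
    refine ⟨c.map (e.symm : _ →+* MvPolynomial (Fin n) ℂ), ?_, ?_⟩
    · rwa [Ne, Polynomial.map_eq_zero_iff (by exact e.symm.injective)]
    · rw [← hφ]
      have h1 := Polynomial.hom_eval₂ (c.map (e.symm : _ →+* MvPolynomial (Fin n) ℂ))
        (aeval (R := ℂ) (mX n) : MvPolynomial (Fin n) ℂ →+* PolyA n) (φ : PolyA n →+* L) (X t)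
      refine h1.trans ?_
      rw [Polynomial.eval₂_map]
      refine Eq.trans ?_ hc
      rw [Polynomial.aeval_def]
      congr 1
      ext x
      have h2 := hm.aeval_repr x
      refine Eq.trans ?_ h2
      change φ (aeval (mX n) (hm.repr x)) = _
      rw [← AlgHom.comp_apply, comp_aeval]
  choose c hc0 hc using hpoly
  refine ⟨∏ t, (c t).leadingCoeff, Finset.prod_ne_zero_iff.2 fun t _ =>
    Polynomial.leadingCoeff_ne_zero.2 (hc0 t), fun m hmne => ?_⟩
  rw [map_prod, Finset.prod_ne_zero_iff] at hmne
  have hroots : ∀ t, (c t).map (eval m) ≠ 0 := by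
    intro t h0
    apply hmne t (Finset.mem_univ t)
    have := congrArg (fun p => p.coeff (c t).natDegree) h0
    simpa using this
  refine (Set.Finite.pi' (fun t : TVar n =>
    (((c t).map (eval m)).roots.toFinset.finite_toSet))).subset ?_
  rintro P ⟨-, h1, rfl⟩ t
  simp only [Finset.mem_coe, Multiset.mem_toFinset]
  rw [Polynomial.mem_roots (hroots t), Polynomial.IsRoot.def, Polynomial.eval_map]
  have h2 := h1 _ (hc t)
  rw [Polynomial.hom_eval₂, eval_X] at h2
  refine Eq.trans ?_ h2
  congr 1
  ext x
  · simp
  · simp [mX, mPart]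

end final

theorem statement17 {n : ℕ} (hn : 3 ≤ n) (c2 : ℤ) (hc2 : c2 ≠ 0) :
    ∃ B : Set (Fin n → ℂ), IsZClosed B ∧ B ≠ Set.univ ∧
      ∀ m : Fin n → ℂ, m ∉ B →
        {P : Pt n | P ∈ Vset n c2 ∧ mPart P = m}.Finite := by
  classical
  let I : Ideal (PolyA n) := Ideal.span (gens n c2)
  have hfin : I.minimalPrimes.Finite := Ideal.finite_minimalPrimes_of_isNoetherianRing _ I
  have hpiece : ∀ q : I.minimalPrimes, ∃ f : MvPolynomial (Fin n) ℂ, f ≠ 0 ∧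
      ∀ m, eval m f ≠ 0 →
        {P : Pt n | P ∈ Vset n c2 ∧ (∀ g ∈ q.1, eval P g = 0) ∧ mPart P = m}.Finite := by
    rintro ⟨q, hq⟩
    have : q.IsPrime := hq.1.1
    exact prime_piece c2 hc2 q (Ideal.span_le.1 hq.1.2)
  choose f hf0 hf using hpiece
  have : Fintype I.minimalPrimes := hfin.fintype
  refine ⟨{m | eval m (∏ q, f q) = 0}, ⟨{∏ q, f q}, by simp⟩, ?_, ?_⟩
  · intro h
    have h0 : (∏ q, f q) = 0 := by
      apply MvPolynomial.funext
      intro m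
      have : m ∈ {m | eval m (∏ q, f q) = 0} := h ▸ Set.mem_univ m
      simpa using this
    exact Finset.prod_ne_zero_iff.2 (fun q _ => hf0 q) h0
  · intro m hm
    have hm' : ∀ q, eval m (f q) ≠ 0 := by
      intro q hq
      apply hm
      rw [Set.mem_ofPred_eq, map_prod]
      exact Finset.prod_eq_zero (Finset.mem_univ q) hq
    refine (Set.finite_iUnion fun q => hf q m (hm' q)).subset ?_
    rintro P ⟨hP, hPm⟩
    have hker : (RingHom.ker (eval P)).IsPrime := RingHom.ker_isPrime _
    have hle : I ≤ RingHom.ker (eval P) :=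
      Ideal.span_le.2 fun g hg => eval_gens c2 P hP.1 g hg
    obtain ⟨q, hq, hqle⟩ := Ideal.exists_minimalPrimes_le hle
    exact Set.mem_iUnion.2 ⟨⟨q, hq⟩, hP, fun g hg => hqle hg, hPm⟩
end
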